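/- arXiv:2101.07233 — 3 statements merged into one kernel-verified Lean document; each statement's English description precedes it below -/
import Mathlib

section
/- Let C be a nonempty strict subset of V, F = V∖C, and define the block matrix P = [[I, −L_FF⁻¹ L_FC], [0, I]] · blockdiag(L_FF⁻¹, SC(L, C)†) · [[I, 0], [−L_CF L_FF⁻¹, I]], with blocks indexed by F then C. Then P is symmetric and L P L = L; consequently, for all x, y ∈ ℝ^V with 1ᵀ x = 1ᵀ y = 0, one has yᵀ L† x = yᵀ P x. -/
/-!
Block elimination of `F = Cᶜ` writes `L = 𝓛 · diag(L_FF, SC(L, C)) · 𝓤` with `𝓛` and `𝓤` block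
unitriangular, and `P = 𝓤⁻¹ · diag(L_FF⁻¹, SC(L, C)†) · 𝓛⁻¹`, so `L * P * L = L` reduces to the
same identity for the diagonal blocks. `L_FF` is invertible: if `L_FF z = 0`, the extension of `z`
by zero has zero energy, so it lies in the kernel of `L`, is constant, and vanishes on `C`. Finally,
all generalized inverses `G` of `L` give the same value `yᵀ G x` whenever `x` is in the column space
of `L` and `y` in its row space, and both spaces contain the mean-zero vectors because they are the
annihilators of kernels consisting of constants.
-/

open Matrix

/-- The four Penrose conditions characterizing the Moore–Penrose pseudoinverse. -/
def IsMoorePenrose {n : Type*} [Fintype n] (M Md : Matrix n n ℝ) : Prop :=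
  M * Md * M = M ∧ Md * M * Md = Md ∧ (M * Md)ᵀ = M * Md ∧ (Md * M)ᵀ = Md * M

section GeneralizedInverse

variable {m n : Type*} [Fintype m] [Fintype n]

lemma IsMoorePenrose.transpose {M G : Matrix n n ℝ} (h : IsMoorePenrose M G) :
    IsMoorePenrose Mᵀ Gᵀ := by
  obtain ⟨hMGM, hGMG, hMG, hGM⟩ := h
  refine ⟨?_, ?_, ?_, ?_⟩
  · rw [← transpose_mul, ← transpose_mul, ← Matrix.mul_assoc, hMGM]
  · rw [← transpose_mul, ← transpose_mul, ← Matrix.mul_assoc, hGMG]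
  · rw [← transpose_mul, hGM, hGM]
  · rw [← transpose_mul, hMG, hMG]

lemma IsMoorePenrose.unique {M G H : Matrix n n ℝ} (hG : IsMoorePenrose M G)
    (hH : IsMoorePenrose M H) : G = H := by
  obtain ⟨hMGM, hGMG, hMG, hGM⟩ := hG
  obtain ⟨hMHM, hHMH, hMH, hHM⟩ := hH
  have range_projection_eq : M * G = M * H := calc
    M * G = (M * H) * (M * G) := by rw [← Matrix.mul_assoc, hMHM]
    _ = ((M * G) * (M * H))ᵀ := by rw [transpose_mul, hMG, hMH]
    _ = M * H := by rw [← Matrix.mul_assoc, hMGM, hMH]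
  have corange_projection_eq : G * M = H * M := calc
    G * M = (G * M) * (H * M) := by rw [Matrix.mul_assoc, ← Matrix.mul_assoc M, hMHM]
    _ = ((H * M) * (G * M))ᵀ := by rw [transpose_mul, hGM, hHM]
    _ = H * M := by rw [Matrix.mul_assoc, ← Matrix.mul_assoc M, hMGM, hHM]
  calc G = G * (M * G) := by rw [← Matrix.mul_assoc, hGMG]
    _ = H * M * H := by rw [range_projection_eq, ← Matrix.mul_assoc, corange_projection_eq]
    _ = H := hHMH

lemma IsMoorePenrose.isHermitian {M G : Matrix n n ℝ} (h : IsMoorePenrose M G)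
    (hM : M.IsHermitian) : G.IsHermitian := by
  rw [IsHermitian, conjTranspose_eq_transpose_of_trivial] at hM ⊢
  exact (hM ▸ h.transpose).unique h

lemma exists_vecMul_eq_of_forall_ker_dotProduct_eq_zero {K : Type*} [Field K]
    {M : Matrix m n K} {y : n → K} (hy : ∀ z, M *ᵥ z = 0 → y ⬝ᵥ z = 0) : ∃ b, b ᵥ* M = y := by
  classical
  have mem_range : dotProductEquiv K n y ∈ LinearMap.range M.mulVecLin.dualMap := by
    rw [LinearMap.range_dualMap_eq_dualAnnihilator_ker, Submodule.mem_dualAnnihilator]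
    exact hy
  obtain ⟨φ, hφ⟩ := mem_range
  obtain ⟨b, rfl⟩ := (dotProductEquiv K m).surjective φ
  refine ⟨b, (dotProductEquiv K n).injective ?_⟩
  rw [← hφ]
  exact LinearMap.ext fun z => (dotProduct_mulVec b M z).symm

lemma dotProduct_mulVec_eq_of_mul_mul_eq_self {K : Type*} [Field K] {M : Matrix m n K}
    {G H : Matrix n m K} (hG : M * G * M = M) (hH : M * H * M = M) {x : m → K} {y : n → K}
    (hx : ∀ z, z ᵥ* M = 0 → x ⬝ᵥ z = 0) (hy : ∀ z, M *ᵥ z = 0 → y ⬝ᵥ z = 0) :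
    y ⬝ᵥ (G *ᵥ x) = y ⬝ᵥ (H *ᵥ x) := by
  obtain ⟨b, rfl⟩ := exists_vecMul_eq_of_forall_ker_dotProduct_eq_zero hy
  obtain ⟨a, rfl⟩ := exists_vecMul_eq_of_forall_ker_dotProduct_eq_zero (M := Mᵀ)
    fun z hz => hx z (by rwa [mulVec_transpose] at hz)
  simp only [vecMul_transpose, ← dotProduct_mulVec, mulVec_mulVec, ← Matrix.mul_assoc, hG, hH]

end GeneralizedInverse

section BlockElimination

lemma mul_mul_eq_self_of_factorization {M : Type*} [Monoid M] {l l' d d' u u' : M}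
    (hl : l' * l = 1) (hu : u * u' = 1) (hd : d * d' * d = d) :
    l * d * u * (u' * d' * l') * (l * d * u) = l * d * u := calc
  l * d * u * (u' * d' * l') * (l * d * u) = l * (d * (u * u') * d' * (l' * l) * d) * u := by
    simp only [mul_assoc]
  _ = l * d * u := by rw [hl, hu, mul_one, mul_one, hd]

variable {m n R : Type*} [Fintype m] [Fintype n] [DecidableEq m] [DecidableEq n] [CommRing R]

/-- The block Cholesky form of a generalized inverse of `fromBlocks A B C D`, where `X` stands for a
generalized inverse of the Schur complement `D - C * A⁻¹ * B`. -/
noncomputable def fromBlocksCholeskyInverse (A : Matrix m m R) (B : Matrix m n R) (C : Matrix n m R)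
    (X : Matrix n n R) : Matrix (m ⊕ n) (m ⊕ n) R :=
  fromBlocks 1 (-(A⁻¹ * B)) 0 1 * fromBlocks A⁻¹ 0 0 X * fromBlocks 1 0 (-(C * A⁻¹)) 1

lemma conjTranspose_fromBlocksCholeskyInverse [StarRing R] (A : Matrix m m R) (B : Matrix m n R)
    (C : Matrix n m R) (X : Matrix n n R) :
    (fromBlocksCholeskyInverse A B C X)ᴴ = fromBlocksCholeskyInverse Aᴴ Cᴴ Bᴴ Xᴴ := by
  simp only [fromBlocksCholeskyInverse, conjTranspose_mul, fromBlocks_conjTranspose,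
    conjTranspose_neg, conjTranspose_nonsing_inv, conjTranspose_zero, conjTranspose_one,
    Matrix.mul_assoc]

lemma fromBlocks_mul_fromBlocksCholeskyInverse_mul {A : Matrix m m R} {B : Matrix m n R}
    {C : Matrix n m R} {D X : Matrix n n R} (hA : IsUnit A)
    (hX : (D - C * A⁻¹ * B) * X * (D - C * A⁻¹ * B) = D - C * A⁻¹ * B) :
    fromBlocks A B C D * fromBlocksCholeskyInverse A B C X * fromBlocks A B C D =
      fromBlocks A B C D := by
  let := hA.invertible
  set S := D - C * A⁻¹ * B
  have ldu : fromBlocks A B C D =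
      fromBlocks 1 0 (C * A⁻¹) 1 * fromBlocks A 0 0 S * fromBlocks 1 (A⁻¹ * B) 0 1 := by
    simpa only [invOf_eq_nonsing_inv] using fromBlocks_eq_of_invertible₁₁ A B C D
  rw [fromBlocksCholeskyInverse, ldu]
  refine mul_mul_eq_self_of_factorization ?_ ?_ ?_ <;> simp [fromBlocks_multiply, S, hX]

end BlockElimination

section VertexPartition

variable {V R : Type*} (L : Matrix V V R) (C : Set V) [DecidablePred (· ∈ C)]

/-- The splitting of the vertices into `Cᶜ` followed by `C`, which indexes the blocks of a matrix
over `V`. `Equiv.sumCompl` lists `C` first. -/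
def complSumEquiv : V ≃ {v // v ∉ C} ⊕ {v // v ∈ C} where
  toFun v := if h : v ∈ C then Sum.inr ⟨v, h⟩ else Sum.inl ⟨v, h⟩
  invFun := Sum.elim Subtype.val Subtype.val
  left_inv v := by by_cases h : v ∈ C <;> simp [h]
  right_inv := by rintro (⟨v, h⟩ | ⟨v, h⟩) <;> simp [h]

lemma submatrix_fromBlocks_toBlock :
    (fromBlocks (L.toBlock (· ∉ C) (· ∉ C)) (L.toBlock (· ∉ C) (· ∈ C))
      (L.toBlock (· ∈ C) (· ∉ C)) (L.toBlock (· ∈ C) (· ∈ C))).submatrix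
        (complSumEquiv C) (complSumEquiv C) = L := by
  ext v w
  by_cases hv : v ∈ C <;> by_cases hw : w ∈ C <;> simp [complSumEquiv, hv, hw]

variable [Fintype V] [DecidableEq V] [CommRing R]

/-- The Schur complement `SC(L, C)` of `L` onto `C`. The inverse is a junk value unless the block of
`L` on `Cᶜ` is invertible. -/
noncomputable def schurComplement : Matrix {v // v ∈ C} {v // v ∈ C} R :=
  L.toBlock (· ∈ C) (· ∈ C) -
    L.toBlock (· ∈ C) (· ∉ C) * (L.toBlock (· ∉ C) (· ∉ C))⁻¹ * L.toBlock (· ∉ C) (· ∈ C)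

/-- The block Cholesky matrix `P`, indexed by the vertices, where `X` stands for `SC(L, C)†`. -/
noncomputable def choleskyInverse (X : Matrix {v // v ∈ C} {v // v ∈ C} R) : Matrix V V R :=
  (fromBlocksCholeskyInverse (L.toBlock (· ∉ C) (· ∉ C)) (L.toBlock (· ∉ C) (· ∈ C))
    (L.toBlock (· ∈ C) (· ∉ C)) X).submatrix (complSumEquiv C) (complSumEquiv C)

variable {L C} {X : Matrix {v // v ∈ C} {v // v ∈ C} R}

lemma mul_choleskyInverse_mul (hL : IsUnit (L.toBlock (· ∉ C) (· ∉ C)))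
    (hX : schurComplement L C * X * schurComplement L C = schurComplement L C) :
    L * choleskyInverse L C X * L = L := by
  have := congrArg (·.submatrix (complSumEquiv C) (complSumEquiv C))
    (fromBlocks_mul_fromBlocksCholeskyInverse_mul hL hX)
  simpa only [choleskyInverse, ← submatrix_mul_equiv _ _ _ (complSumEquiv C),
    submatrix_fromBlocks_toBlock] using this

variable [StarRing R]

lemma isHermitian_schurComplement (hL : L.IsHermitian) : (schurComplement L C).IsHermitian := by
  simp only [IsHermitian, schurComplement, toBlock, conjTranspose_sub, conjTranspose_mul,
    conjTranspose_nonsing_inv, conjTranspose_submatrix, hL.eq, Matrix.mul_assoc]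

lemma isHermitian_choleskyInverse (hL : L.IsHermitian) (hX : X.IsHermitian) :
    (choleskyInverse L C X).IsHermitian := by
  simp only [IsHermitian, choleskyInverse, conjTranspose_submatrix,
    conjTranspose_fromBlocksCholeskyInverse, toBlock, hL.eq, hX.eq]

end VertexPartition

section PosSemidef

variable {V 𝕜 : Type*} [Fintype V] [RCLike 𝕜] {L : Matrix V V 𝕜}

open scoped ComplexOrder

lemma posDef_submatrix_of_forall_ker_eq_zero {ι : Type*} [Finite ι] (hL : L.PosSemidef)
    {f : ι → V} (hf : f.Injective)
    (huniq : ∀ x, L *ᵥ x = 0 → (∀ v ∉ Set.range f, x v = 0) → x = 0) :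
    (L.submatrix f f).PosDef := by
  classical
  cases nonempty_fintype ι
  let J : Matrix V ι 𝕜 := (1 : Matrix V V 𝕜).submatrix id f
  have submatrix_eq : L.submatrix f f = Jᴴ * L * J := by
    ext i j
    simp [J, Matrix.mul_apply, one_apply]
  have J_mulVec_apply (z : ι → 𝕜) (i : ι) : (J *ᵥ z) (f i) = z i := by
    simp [J, mulVec, dotProduct, one_apply, hf.eq_iff]
  have J_mulVec_of_notMem_range (z : ι → 𝕜) (v : V) (hv : v ∉ Set.range f) : (J *ᵥ z) v = 0 := by
    simp only [Set.mem_range, not_exists] at hv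
    simp [J, mulVec, dotProduct, one_apply, fun i => Ne.symm (hv i)]
  rw [(hL.submatrix f).posDef_iff_isUnit, ← mulVec_injective_iff_isUnit, submatrix_eq]
  refine (injective_iff_map_eq_zero (mulVecLin (Jᴴ * L * J))).2 fun z (hz : _ *ᵥ z = 0) => ?_
  have energy_eq_zero : star (J *ᵥ z) ⬝ᵥ (L *ᵥ (J *ᵥ z)) = 0 := by
    rw [star_mulVec, ← dotProduct_mulVec, mulVec_mulVec, mulVec_mulVec, hz,
      dotProduct_zero]
  have extension_eq_zero : J *ᵥ z = 0 :=
    huniq _ ((hL.dotProduct_mulVec_zero_iff _).1 energy_eq_zero) (J_mulVec_of_notMem_range z)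
  ext i
  rw [← J_mulVec_apply z i, extension_eq_zero, Pi.zero_apply, Pi.zero_apply]

theorem cholesky_factorization_pseudoinverse_general [DecidableEq V] (hL : L.PosSemidef)
    (hker : ∀ x : V → 𝕜, L *ᵥ x = 0 → ∀ v w, x v = x w) {G : Matrix V V 𝕜} (hG : L * G * L = L)
    {C : Set V} [DecidablePred (· ∈ C)] (hC : C.Nonempty)
    {X : Matrix {v // v ∈ C} {v // v ∈ C} 𝕜} (hX : X.IsHermitian)
    (hSX : schurComplement L C * X * schurComplement L C = schurComplement L C) :
    (choleskyInverse L C X).IsHermitian ∧ L * choleskyInverse L C X * L = L ∧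
      ∀ x y : V → 𝕜, ∑ v, x v = 0 → ∑ v, y v = 0 →
        y ⬝ᵥ (G *ᵥ x) = y ⬝ᵥ (choleskyInverse L C X *ᵥ x) := by
  have hP : L * choleskyInverse L C X * L = L := by
    refine mul_choleskyInverse_mul (PosDef.isUnit ?_) hSX
    refine posDef_submatrix_of_forall_ker_eq_zero hL Subtype.val_injective fun x hx hxC => ?_
    obtain ⟨c, hc⟩ := hC
    ext v
    rw [hker x hx v c]
    exact hxC c (by simpa using hc)
  have dotProduct_eq_zero_of_constant {x z : V → 𝕜} (hx : ∑ v, x v = 0) (hz : ∀ v w, z v = z w) :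
      x ⬝ᵥ z = 0 := by
    obtain ⟨c, -⟩ := hC
    simp only [dotProduct, hz _ c, ← Finset.sum_mul, hx, zero_mul]
  refine ⟨isHermitian_choleskyInverse hL.isHermitian hX, hP, fun x y hx hy => ?_⟩
  refine dotProduct_mulVec_eq_of_mul_mul_eq_self hG hP (fun z hz => ?_) (fun z hz => ?_)
  · have star_mem_ker : L *ᵥ star z = 0 := by
      rw [← hL.isHermitian.eq, ← star_vecMul, hz, star_zero]
    exact dotProduct_eq_zero_of_constant hx fun v w => star_injective (hker _ star_mem_ker v w)
  · exact dotProduct_eq_zero_of_constant hy (hker z hz)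

end PosSemidef

/-- Lemma `cholesky`: the block Cholesky factorization
`P = [[I, −L_FF⁻¹L_FC],[0,I]] · blockdiag(L_FF⁻¹, SC(L,C)†) · [[I,0],[−L_CF L_FF⁻¹,I]]`
is symmetric, satisfies `L P L = L`, and hence agrees with `L†` on mean-zero vectors. -/
theorem cholesky_factorization_pseudoinverse {V E : Type*} [Fintype V] [Fintype E]
    [DecidableEq V] [DecidableEq E] [Nonempty E]
    (head tail : E → V) (s t : V) (hst : s ≠ t)
    (r : E → ℝ) (hr : ∀ e, 0 < r e)
    (B : Matrix E V ℝ)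
    (hB : ∀ e v, B e v = (if v = head e then (1 : ℝ) else 0) - (if v = tail e then 1 else 0))
    (L : Matrix V V ℝ)
    (hL : L = Bᵀ * Matrix.diagonal (fun e => (r e)⁻¹) * B)
    (hconn : ∀ x : V → ℝ, L *ᵥ x = 0 → ∀ v w : V, x v = x w)
    (Ld : Matrix V V ℝ) (hLd : IsMoorePenrose L Ld)
    (C : Set V) [DecidablePred (· ∈ C)] (hC : C.Nonempty) (hCne : C ≠ Set.univ)
    (LFF : Matrix {v // v ∉ C} {v // v ∉ C} ℝ) (hLFF : LFF = Matrix.of fun a b => L a.1 b.1)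
    (LFC : Matrix {v // v ∉ C} {v // v ∈ C} ℝ) (hLFC : LFC = Matrix.of fun a b => L a.1 b.1)
    (LCF : Matrix {v // v ∈ C} {v // v ∉ C} ℝ) (hLCF : LCF = Matrix.of fun a b => L a.1 b.1)
    (LCC : Matrix {v // v ∈ C} {v // v ∈ C} ℝ) (hLCC : LCC = Matrix.of fun a b => L a.1 b.1)
    (SC : Matrix {v // v ∈ C} {v // v ∈ C} ℝ) (hSC : SC = LCC - LCF * LFF⁻¹ * LFC)
    (SCd : Matrix {v // v ∈ C} {v // v ∈ C} ℝ) (hSCd : IsMoorePenrose SC SCd)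
    (P : Matrix V V ℝ)
    (hP : P =
      (Matrix.fromBlocks 1 (-(LFF⁻¹ * LFC)) 0 1 *
          Matrix.fromBlocks LFF⁻¹ 0 0 SCd *
            Matrix.fromBlocks 1 0 (-(LCF * LFF⁻¹)) 1).submatrix
        (fun v => if h : v ∈ C then Sum.inr (⟨v, h⟩ : {v // v ∈ C})
          else Sum.inl (⟨v, h⟩ : {v // v ∉ C}))
        (fun v => if h : v ∈ C then Sum.inr (⟨v, h⟩ : {v // v ∈ C})
          else Sum.inl (⟨v, h⟩ : {v // v ∉ C}))) :
    Pᵀ = P ∧ L * P * L = L ∧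
      ∀ x y : V → ℝ, ∑ v, x v = 0 → ∑ v, y v = 0 →
        y ⬝ᵥ (Ld *ᵥ x) = y ⬝ᵥ (P *ᵥ x) := by
  have posSemidef : L.PosSemidef := by
    simpa [hL] using
      (PosSemidef.diagonal fun e => (inv_pos.2 (hr e)).le).conjTranspose_mul_mul_same B
  subst hLFF hLFC hLCF hLCC hSC
  rw [show P = choleskyInverse L C SCd from hP, ← conjTranspose_eq_transpose_of_trivial]
  exact cholesky_factorization_pseudoinverse_general posSemidef hconn hLd.1 hC
    (hSCd.isHermitian (isHermitian_schurComplement posSemidef.isHermitian)) hSCd.1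
end

section
/- Suppose G is preconditioned, μ ∈ (0, F*], 1 ≤ k ≤ √m/10, and μ̂ = μ − kμ/√m. Then for every edge e, (1/(10⁶ k⁴)) · r(f(μ̂))_e ≤ r(f(μ))_e ≤ 10⁶ k⁴ · r(f(μ̂))_e. -/
open Matrix

/-- Resistances induced by a flow: `r(f)_e = u⁺(f)_e⁻² + u⁻(f)_e⁻²`. -/
noncomputable def resist {E : Type*} (u f : E → ℝ) (e : E) : ℝ :=
  ((u e - f e) ^ 2)⁻¹ + ((u e + f e) ^ 2)⁻¹

/-- KKT characterization of the central path flow with parameter `μ`. -/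
def IsCentralFlow {V E : Type*} [Fintype V] [Fintype E]
    (B : Matrix E V ℝ) (u : E → ℝ) (χst : V → ℝ) (Fstar μ : ℝ) (f : E → ℝ) : Prop :=
  (∀ e, |f e| < u e) ∧ Bᵀ *ᵥ f = (Fstar - μ) • χst ∧
    ∃ φ : V → ℝ, ∀ e, (B *ᵥ φ) e = (u e - f e)⁻¹ - (u e + f e)⁻¹

/-- Preconditioned graph with parameter `U` and preconditioning edges `P`. -/
def Preconditioned {V E : Type*} [Fintype E] (head tail : E → V) (s t : V)
    (u : E → ℝ) (U : ℝ) (P : Finset E) : Prop :=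
  0 < U ∧
    (∀ e ∈ P, u e = 2 * U ∧ ((head e = s ∧ tail e = t) ∨ (head e = t ∧ tail e = s))) ∧
    (∀ e ∉ P, u e ≤ U) ∧ Fintype.card E ≤ 2 * P.card

/-!
Let `f`, `f'` be the central path flows at `μ`, `ν` and let `S` be the sum over the `m` edges of
`f' - f` times the change of the barrier gradient. The terms of `S` are nonnegative and each, up
to an additive `2`, bounds the ratios of the slacks of `f` and `f'` on its edge; so it suffices to
bound `S`. As the barrier gradients are potential differences, `S = (μ - ν) * D`, where `D` is the
change of the `s`-`t` potential drop.

Testing the barrier gradient against `±` a feasible flow of the value `F` that defines the path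
bounds the potential drops by `m / μ` and `m / ν`. On the preconditioning edges, whose gradient is
this drop up to sign, the slacks are therefore not small, so the secant resistance there is at most
`8 * m ^ 2 / (μ * ν)`. At least `m / 2` edges are of this kind and all carry the gradient change
`± D`, which forces `m / 2 * D ^ 2 ≤ 8 * m ^ 2 / (μ * ν) * S`. Together with
`S ^ 2 = (μ - ν) ^ 2 * D ^ 2` this gives `S ≤ 16 * m * (μ - ν) ^ 2 / (μ * ν)`.
-/

/-- The derivative at `x` of the logarithmic barrier `-log (u - x) - log (u + x)` of an edge of
capacity `u`. -/
noncomputable def barrierDeriv (u x : ℝ) : ℝ :=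
  (u - x)⁻¹ - (u + x)⁻¹

/-- The slope of the secant of `barrierDeriv u` through `x` and `y`. On the diagonal it is the
resistance of an edge of capacity `u` carrying flow `x`. -/
noncomputable def secantResist (u x y : ℝ) : ℝ :=
  (u - x)⁻¹ * (u - y)⁻¹ + (u + x)⁻¹ * (u + y)⁻¹

/-- The energy that the flow change `y - x` dissipates on an edge with the secant resistance of `x`
and `y`, that is, `y - x` times the change of `barrierDeriv u`. -/
noncomputable def secantEnergy (u x y : ℝ) : ℝ :=
  secantResist u x y * (y - x) ^ 2

/-- `F` is the value of a flow that respects the capacities `u` and has net inflows `F • χ`. -/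
def IsFeasibleValue {V E : Type*} [Fintype E] (B : Matrix E V ℝ) (u : E → ℝ) (χ : V → ℝ)
    (F : ℝ) : Prop :=
  ∃ g : E → ℝ, (∀ e, |g e| ≤ u e) ∧ Bᵀ *ᵥ g = F • χ

/-- A central path flow `f` together with a vertex potential `φ` certifying its optimality: the
potential differences are the derivatives of the barrier at `f`. -/
structure IsCentralPair {V E : Type*} [Fintype V] [Fintype E]
    (B : Matrix E V ℝ) (u : E → ℝ) (χ : V → ℝ) (F μ : ℝ) (f : E → ℝ) (φ : V → ℝ) : Prop where
  strictlyFeasible : ∀ e, |f e| < u e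
  routes : Bᵀ *ᵥ f = (F - μ) • χ
  gradient : ∀ e, (B *ᵥ φ) e = barrierDeriv (u e) (f e)

section Edge

variable {u x y : ℝ}

lemma barrierDeriv_mul_sub_le_one {z : ℝ} (hx : |x| < u) (hz : |z| ≤ u) :
    barrierDeriv u x * (z - x) ≤ 1 := by
  obtain ⟨hx₁, hx₂⟩ := abs_lt.mp hx
  have hsub : 0 < u - x := by linarith
  have hadd : 0 < u + x := by linarith
  have hderiv : barrierDeriv u x * (z - x) = 2 * x * (z - x) / ((u - x) * (u + x)) := by
    unfold barrierDeriv
    field_simp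
    ring
  have hz_sq : z ^ 2 ≤ u ^ 2 := sq_le_sq' (abs_le.mp hz).1 (abs_le.mp hz).2
  rw [hderiv, div_le_one (mul_pos hsub hadd)]
  linarith [sq_nonneg (z - x)]

-- The larger slack is at least `u`, and the derivative is the difference of the inverse slacks.
lemma inv_slack_le_abs_barrierDeriv_add (hx : |x| < u) :
    (u - x)⁻¹ ≤ |barrierDeriv u x| + u⁻¹ ∧ (u + x)⁻¹ ≤ |barrierDeriv u x| + u⁻¹ := by
  have hu : 0 < u := (abs_nonneg x).trans_lt hx
  have hle : barrierDeriv u x ≤ |barrierDeriv u x| := le_abs_self _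
  have hneg : -barrierDeriv u x ≤ |barrierDeriv u x| := neg_le_abs _
  have hderiv : barrierDeriv u x = (u - x)⁻¹ - (u + x)⁻¹ := rfl
  rcases le_total 0 x with h | h
  · have hslack : (u + x)⁻¹ ≤ u⁻¹ := inv_anti₀ hu (by linarith)
    constructor <;> linarith [abs_nonneg (barrierDeriv u x)]
  · have hslack : (u - x)⁻¹ ≤ u⁻¹ := inv_anti₀ hu (by linarith)
    constructor <;> linarith [abs_nonneg (barrierDeriv u x)]

lemma barrierDeriv_sub (hx : |x| < u) (hy : |y| < u) :
    barrierDeriv u y - barrierDeriv u x = secantResist u x y * (y - x) := by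
  obtain ⟨hx₁, hx₂⟩ := abs_lt.mp hx
  obtain ⟨hy₁, hy₂⟩ := abs_lt.mp hy
  have hx_sub : u - x ≠ 0 := by linarith
  have hx_add : u + x ≠ 0 := by linarith
  have hy_sub : u - y ≠ 0 := by linarith
  have hy_add : u + y ≠ 0 := by linarith
  unfold barrierDeriv secantResist
  field_simp
  ring

lemma inv_slack_pos (hx : |x| < u) : 0 < (u - x)⁻¹ ∧ 0 < (u + x)⁻¹ := by
  obtain ⟨hx₁, hx₂⟩ := abs_lt.mp hx
  exact ⟨inv_pos.mpr (by linarith), inv_pos.mpr (by linarith)⟩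

lemma secantResist_pos (hx : |x| < u) (hy : |y| < u) : 0 < secantResist u x y :=
  add_pos (mul_pos (inv_slack_pos hx).1 (inv_slack_pos hy).1)
    (mul_pos (inv_slack_pos hx).2 (inv_slack_pos hy).2)

lemma secantEnergy_comm (u x y : ℝ) : secantEnergy u x y = secantEnergy u y x := by
  unfold secantEnergy secantResist
  ring

lemma secantResist_le (hx : |x| < u) (hy : |y| < u) :
    secantResist u x y ≤
      2 * ((|barrierDeriv u x| + u⁻¹) * (|barrierDeriv u y| + u⁻¹)) := by
  obtain ⟨hx_sub, hx_add⟩ := inv_slack_le_abs_barrierDeriv_add hx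
  obtain ⟨hy_sub, hy_add⟩ := inv_slack_le_abs_barrierDeriv_add hy
  have hx_nonneg := (inv_slack_pos hx).1.le.trans hx_sub
  rw [two_mul]
  exact add_le_add (mul_le_mul hx_sub hy_sub (inv_slack_pos hy).1.le hx_nonneg)
    (mul_le_mul hx_add hy_add (inv_slack_pos hy).2.le hx_nonneg)

lemma inv_sq_le_of_inv_mul_inv_mul_sub_sq_le {a b K : ℝ} (ha : 0 < a) (hb : 0 < b)
    (h : a⁻¹ * b⁻¹ * (b - a) ^ 2 ≤ K) : (b ^ 2)⁻¹ ≤ (2 + K) ^ 2 * (a ^ 2)⁻¹ := by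
  have hab : a / b ≤ 2 + K := by
    have hexpand : a⁻¹ * b⁻¹ * (b - a) ^ 2 = a / b + b / a - 2 := by
      field_simp
      ring
    have hba : 0 < b / a := by positivity
    linarith
  calc (b ^ 2)⁻¹ = (a / b) ^ 2 * (a ^ 2)⁻¹ := by field_simp
    _ ≤ (2 + K) ^ 2 * (a ^ 2)⁻¹ := by gcongr

lemma resist_nonneg {E : Type*} (u f : E → ℝ) (e : E) : 0 ≤ resist u f e := by
  unfold resist
  positivity

lemma resist_le_of_secantEnergy_le {E : Type*} {u f g : E → ℝ} {e : E} {K : ℝ}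
    (hf : |f e| < u e) (hg : |g e| < u e)
    (h : secantEnergy (u e) (f e) (g e) ≤ K) :
    resist u g e ≤ (2 + K) ^ 2 * resist u f e := by
  obtain ⟨hf_sub, hf_add⟩ := inv_slack_pos hf
  obtain ⟨hg_sub, hg_add⟩ := inv_slack_pos hg
  have hsub_nonneg : 0 ≤ (u e - f e)⁻¹ * (u e - g e)⁻¹ * (g e - f e) ^ 2 := by positivity
  have hadd_nonneg : 0 ≤ (u e + f e)⁻¹ * (u e + g e)⁻¹ * (g e - f e) ^ 2 := by positivity
  rw [secantEnergy, secantResist, add_mul] at h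
  unfold resist
  rw [mul_add]
  refine add_le_add
    (inv_sq_le_of_inv_mul_inv_mul_sub_sq_le (inv_pos.mp hf_sub) (inv_pos.mp hg_sub) ?_)
    (inv_sq_le_of_inv_mul_inv_mul_sub_sq_le (inv_pos.mp hf_add) (inv_pos.mp hg_add) ?_)
  · rw [sub_sub_sub_cancel_left, sub_sq_comm]
    linarith
  · rw [add_sub_add_left_eq_sub]
    linarith

end Edge

section Flow

variable {V E : Type*} {B : Matrix E V ℝ}

lemma mulVec_dotProduct_eq_mul_of_transpose_mulVec_eq [Fintype V] [Fintype E] {χ : V → ℝ}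
    {h : E → ℝ} {c : ℝ} (hh : Bᵀ *ᵥ h = c • χ) (φ : V → ℝ) :
    (B *ᵥ φ) ⬝ᵥ h = c * (χ ⬝ᵥ φ) := by
  rw [dotProduct_comm, dotProduct_mulVec, ← mulVec_transpose, hh, smul_dotProduct, smul_eq_mul]

lemma transpose_mulVec_apply_le_sum [Fintype E] {g u : E → ℝ} {v : V}
    (hB : ∀ e, |B e v| ≤ 1) (hg : ∀ e, |g e| ≤ u e) : (Bᵀ *ᵥ g) v ≤ ∑ e, u e := by
  refine Finset.sum_le_sum fun e _ ↦ ?_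
  calc B e v * g e ≤ |B e v| * |g e| := (le_abs_self _).trans (abs_mul _ _).le
    _ ≤ |g e| := mul_le_of_le_one_left (abs_nonneg _) (hB e)
    _ ≤ u e := hg e

lemma abs_mulVec_eq_of_row_eq [Fintype V] {χ : V → ℝ} {e : E} (hrow : B e = χ ∨ B e = -χ)
    (φ : V → ℝ) : |(B *ᵥ φ) e| = |χ ⬝ᵥ φ| := by
  change |B e ⬝ᵥ φ| = |χ ⬝ᵥ φ|
  rcases hrow with hrow | hrow <;> simp [hrow]

end Flow

namespace IsCentralPair

variable {V E : Type*} [Fintype V] [Fintype E] {B : Matrix E V ℝ} {u : E → ℝ} {χ : V → ℝ}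
  {F μ ν : ℝ} {f f' : E → ℝ} {φ φ' : V → ℝ}

lemma sub_mul_drop_le_card (hf : IsCentralPair B u χ F μ f φ) {h : E → ℝ} {c : ℝ}
    (hh : ∀ e, |h e| ≤ u e) (hroutes : Bᵀ *ᵥ h = c • χ) :
    (c - (F - μ)) * (χ ⬝ᵥ φ) ≤ Fintype.card E := by
  have hdiff : Bᵀ *ᵥ (h - f) = (c - (F - μ)) • χ := by
    rw [mulVec_sub, hroutes, hf.routes, ← sub_smul]
  rw [← mulVec_dotProduct_eq_mul_of_transpose_mulVec_eq hdiff]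
  calc (B *ᵥ φ) ⬝ᵥ (h - f) ≤ ∑ _e : E, (1 : ℝ) := by
        refine Finset.sum_le_sum fun e _ ↦ ?_
        rw [hf.gradient]
        exact barrierDeriv_mul_sub_le_one (hf.strictlyFeasible e) (hh e)
    _ = Fintype.card E := by simp

lemma abs_drop_le (hf : IsCentralPair B u χ F μ f φ)
    (hF : IsFeasibleValue B u χ F) (hμ : 0 < μ) (hμF : μ ≤ F) :
    |χ ⬝ᵥ φ| ≤ Fintype.card E / μ := by
  obtain ⟨g, hg, hgF⟩ := hF
  have hpos := hf.sub_mul_drop_le_card hg hgF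
  have hneg := hf.sub_mul_drop_le_card (h := -g) (c := -F) (by simpa using hg)
    (by rw [mulVec_neg, hgF, neg_smul])
  rw [le_div_iff₀ hμ]
  rcases le_total 0 (χ ⬝ᵥ φ) with hdrop | hdrop
  · rw [abs_of_nonneg hdrop]
    linarith
  · rw [abs_of_nonpos hdrop]
    linarith [mul_nonneg_of_nonpos_of_nonpos (sub_nonpos.mpr hμF) hdrop]

lemma mulVec_sub_apply (hf : IsCentralPair B u χ F μ f φ) (hf' : IsCentralPair B u χ F ν f' φ')
    (e : E) : (B *ᵥ (φ' - φ)) e = secantResist (u e) (f e) (f' e) * (f' e - f e) := by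
  rw [mulVec_sub, Pi.sub_apply, hf.gradient, hf'.gradient,
    barrierDeriv_sub (hf.strictlyFeasible e) (hf'.strictlyFeasible e)]

lemma secantEnergy_nonneg (hf : IsCentralPair B u χ F μ f φ)
    (hf' : IsCentralPair B u χ F ν f' φ') (e : E) : 0 ≤ secantEnergy (u e) (f e) (f' e) :=
  mul_nonneg (secantResist_pos (hf.strictlyFeasible e) (hf'.strictlyFeasible e)).le (sq_nonneg _)

lemma sum_secantEnergy_eq (hf : IsCentralPair B u χ F μ f φ)
    (hf' : IsCentralPair B u χ F ν f' φ') :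
    ∑ e, secantEnergy (u e) (f e) (f' e) = (μ - ν) * (χ ⬝ᵥ (φ' - φ)) := by
  have hdiff : Bᵀ *ᵥ (f' - f) = (μ - ν) • χ := by
    rw [mulVec_sub, hf.routes, hf'.routes, ← sub_smul, sub_sub_sub_cancel_left]
  rw [← mulVec_dotProduct_eq_mul_of_transpose_mulVec_eq hdiff]
  refine Finset.sum_congr rfl fun e _ ↦ ?_
  rw [hf.mulVec_sub_apply hf', Pi.sub_apply, secantEnergy]
  ring

lemma abs_barrierDeriv_add_inv_le (hf : IsCentralPair B u χ F μ f φ)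
    (hF : IsFeasibleValue B u χ F) (hμ : 0 < μ) (hμF : μ ≤ F)
    {e : E} (hrow : B e = χ ∨ B e = -χ) (hu : (u e)⁻¹ ≤ Fintype.card E / F) :
    |barrierDeriv (u e) (f e)| + (u e)⁻¹ ≤ 2 * (Fintype.card E / μ) := by
  have hcard : (Fintype.card E : ℝ) / F ≤ Fintype.card E / μ := by gcongr
  rw [← hf.gradient, abs_mulVec_eq_of_row_eq hrow, two_mul]
  exact add_le_add (hf.abs_drop_le hF hμ hμF) (hu.trans hcard)

lemma sq_drop_sub_le (hf : IsCentralPair B u χ F μ f φ) (hf' : IsCentralPair B u χ F ν f' φ')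
    (hF : IsFeasibleValue B u χ F) (hμ : 0 < μ) (hμF : μ ≤ F) (hν : 0 < ν) (hνF : ν ≤ F)
    {e : E} (hrow : B e = χ ∨ B e = -χ) (hu : (u e)⁻¹ ≤ Fintype.card E / F) :
    (χ ⬝ᵥ (φ' - φ)) ^ 2 ≤ 8 * (Fintype.card E : ℝ) ^ 2 / (μ * ν) *
      secantEnergy (u e) (f e) (f' e) := by
  have hcap : 0 < u e := (abs_nonneg _).trans_lt (hf.strictlyFeasible e)
  have hsecant : secantResist (u e) (f e) (f' e) ≤ 8 * (Fintype.card E : ℝ) ^ 2 / (μ * ν) :=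
    calc secantResist (u e) (f e) (f' e)
      _ ≤ 2 * ((|barrierDeriv (u e) (f e)| + (u e)⁻¹) *
            (|barrierDeriv (u e) (f' e)| + (u e)⁻¹)) :=
          secantResist_le (hf.strictlyFeasible e) (hf'.strictlyFeasible e)
      _ ≤ 2 * (2 * (Fintype.card E / μ) * (2 * (Fintype.card E / ν))) := by
          gcongr
          · exact hf.abs_barrierDeriv_add_inv_le hF hμ hμF hrow hu
          · exact hf'.abs_barrierDeriv_add_inv_le hF hν hνF hrow hu
      _ = 8 * (Fintype.card E : ℝ) ^ 2 / (μ * ν) := by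
          field_simp
          ring
  calc (χ ⬝ᵥ (φ' - φ)) ^ 2
    _ = ((B *ᵥ (φ' - φ)) e) ^ 2 := sq_eq_sq_iff_abs_eq_abs _ _ |>.mpr
          (abs_mulVec_eq_of_row_eq hrow _).symm
    _ = secantResist (u e) (f e) (f' e) * secantEnergy (u e) (f e) (f' e) := by
        rw [hf.mulVec_sub_apply hf', secantEnergy]
        ring
    _ ≤ _ := mul_le_mul_of_nonneg_right hsecant (hf.secantEnergy_nonneg hf' e)

lemma sq_drop_sub_le_sum [Nonempty E] (hf : IsCentralPair B u χ F μ f φ)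
    (hf' : IsCentralPair B u χ F ν f' φ') (hF : IsFeasibleValue B u χ F)
    (hμ : 0 < μ) (hμF : μ ≤ F) (hν : 0 < ν) (hνF : ν ≤ F) {P : Finset E}
    (hrow : ∀ e ∈ P, B e = χ ∨ B e = -χ) (hu : ∀ e ∈ P, (u e)⁻¹ ≤ Fintype.card E / F)
    (hcard : Fintype.card E ≤ 2 * P.card) :
    (χ ⬝ᵥ (φ' - φ)) ^ 2 ≤
      16 * Fintype.card E / (μ * ν) * ∑ e, secantEnergy (u e) (f e) (f' e) := by
  set m : ℝ := (Fintype.card E : ℝ) with hm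
  set D : ℝ := χ ⬝ᵥ (φ' - φ)
  set S : ℝ := ∑ e, secantEnergy (u e) (f e) (f' e) with hS
  have hm_pos : 0 < m := by simp [hm, Fintype.card_pos]
  have hcard' : m ≤ 2 * P.card := by
    rw [hm]
    exact_mod_cast hcard
  have hP : P.card * D ^ 2 ≤ 8 * m ^ 2 / (μ * ν) * S := by
    rw [← nsmul_eq_mul, ← Finset.sum_const, hS, Finset.mul_sum]
    exact (Finset.sum_le_sum fun e he ↦
        hf.sq_drop_sub_le hf' hF hμ hμF hν hνF (hrow e he) (hu e he)).trans
      (Finset.sum_le_univ_sum_of_nonneg fun e ↦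
        mul_nonneg (by positivity) (hf.secantEnergy_nonneg hf' e))
  refine le_of_mul_le_mul_left ?_ hm_pos
  calc m * D ^ 2 ≤ 2 * P.card * D ^ 2 := by gcongr
    _ = 2 * (P.card * D ^ 2) := by ring
    _ ≤ 2 * (8 * m ^ 2 / (μ * ν) * S) := by gcongr
    _ = m * (16 * m / (μ * ν) * S) := by ring

lemma secantEnergy_le (hf : IsCentralPair B u χ F μ f φ) (hf' : IsCentralPair B u χ F ν f' φ')
    (hF : IsFeasibleValue B u χ F) (hμ : 0 < μ) (hμF : μ ≤ F) (hν : 0 < ν) (hνF : ν ≤ F)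
    {P : Finset E} (hrow : ∀ e ∈ P, B e = χ ∨ B e = -χ)
    (hu : ∀ e ∈ P, (u e)⁻¹ ≤ Fintype.card E / F) (hcard : Fintype.card E ≤ 2 * P.card) (e : E) :
    secantEnergy (u e) (f e) (f' e) ≤ 16 * Fintype.card E * (μ - ν) ^ 2 / (μ * ν) := by
  have : Nonempty E := ⟨e⟩
  set S : ℝ := ∑ e, secantEnergy (u e) (f e) (f' e)
  have hle : secantEnergy (u e) (f e) (f' e) ≤ S :=
    Finset.single_le_sum (fun i _ ↦ hf.secantEnergy_nonneg hf' i) (Finset.mem_univ e)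
  have hSD : S = (μ - ν) * (χ ⬝ᵥ (φ' - φ)) := hf.sum_secantEnergy_eq hf'
  have hS_nonneg : 0 ≤ S := (hf.secantEnergy_nonneg hf' e).trans hle
  have hS_sq : S * S ≤ 16 * Fintype.card E * (μ - ν) ^ 2 / (μ * ν) * S :=
    calc S * S = (μ - ν) ^ 2 * (χ ⬝ᵥ (φ' - φ)) ^ 2 := by
          rw [hSD, ← sq, mul_pow]
      _ ≤ (μ - ν) ^ 2 * (16 * Fintype.card E / (μ * ν) * S) := by
          gcongr
          exact hf.sq_drop_sub_le_sum hf' hF hμ hμF hν hνF hrow hu hcard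
      _ = 16 * Fintype.card E * (μ - ν) ^ 2 / (μ * ν) * S := by ring
  refine hle.trans ?_
  rcases hS_nonneg.eq_or_lt with hS_zero | hS_pos
  · rw [← hS_zero]
    positivity
  · exact le_of_mul_le_mul_right hS_sq hS_pos

end IsCentralPair

namespace Preconditioned

variable {V E : Type*} [Fintype E] {head tail : E → V} {s t : V} {u : E → ℝ} {U : ℝ}
  {P : Finset E}

lemma capacity_le (hpre : Preconditioned head tail s t u U P) (e : E) : u e ≤ 2 * U := by
  obtain ⟨hU, hP, hnP, -⟩ := hpre
  by_cases he : e ∈ P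
  · exact (hP e he).1.le
  · linarith [hnP e he]

lemma row_eq [DecidableEq V] (hpre : Preconditioned head tail s t u U P) {B : Matrix E V ℝ}
    (hB : ∀ e v, B e v = (if v = head e then (1 : ℝ) else 0) - (if v = tail e then 1 else 0))
    {χ : V → ℝ} (hχ : χ = fun v => (if v = t then (1 : ℝ) else 0) - (if v = s then 1 else 0))
    {e : E} (he : e ∈ P) : B e = χ ∨ B e = -χ := by
  rcases (hpre.2.1 e he).2 with ⟨hhead, htail⟩ | ⟨hhead, htail⟩
  · right
    ext v
    simp [hB, hχ, hhead, htail]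
  · left
    ext v
    simp [hB, hχ, hhead, htail]

lemma inv_capacity_le [DecidableEq V] (hpre : Preconditioned head tail s t u U P)
    (hst : s ≠ t) {B : Matrix E V ℝ}
    (hB : ∀ e v, B e v = (if v = head e then (1 : ℝ) else 0) - (if v = tail e then 1 else 0))
    {χ : V → ℝ} (hχ : χ = fun v => (if v = t then (1 : ℝ) else 0) - (if v = s then 1 else 0))
    {F : ℝ} (hF_pos : 0 < F) (hF : IsFeasibleValue B u χ F)
    {e : E} (he : e ∈ P) : (u e)⁻¹ ≤ Fintype.card E / F := by
  obtain ⟨g, hg, hgF⟩ := hF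
  have hU : 0 < U := hpre.1
  have hB_abs : ∀ e, |B e t| ≤ 1 := fun e ↦ by
    rw [hB]
    split_ifs <;> norm_num
  have hF_le : F ≤ Fintype.card E * (2 * U) :=
    calc F = (Bᵀ *ᵥ g) t := by simp [hgF, hχ, hst.symm]
      _ ≤ ∑ e, u e := transpose_mulVec_apply_le_sum hB_abs hg
      _ ≤ ∑ _e : E, 2 * U := Finset.sum_le_sum fun e _ ↦ hpre.capacity_le e
      _ = Fintype.card E * (2 * U) := by simp
  rw [(hpre.2.1 e he).1, inv_eq_one_div, div_le_div_iff₀ (by positivity) hF_pos]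
  linarith

end Preconditioned

section ShortStep

variable {m k μ ν : ℝ}

lemma short_step_mem_Icc (hμ : 0 < μ) (hk : 1 ≤ k) (hkm : k ≤ √m / 10)
    (hν : ν = μ - k * μ / √m) : ν ∈ Set.Icc (9 / 10 * μ) μ := by
  have hm : 0 < √m := by linarith
  have hstep_nonneg : 0 ≤ k * μ / √m := by positivity
  have hstep_le : k * μ / √m ≤ μ / 10 := by
    rw [div_le_iff₀ hm]
    linarith [mul_le_mul_of_nonneg_right hkm hμ.le]
  constructor <;> linarith

lemma short_step_factor_le (hμ : 0 < μ) (hk : 1 ≤ k) (hkm : k ≤ √m / 10)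
    (hν : ν = μ - k * μ / √m) :
    (2 + 16 * m * (μ - ν) ^ 2 / (μ * ν)) ^ 2 ≤ 10 ^ 6 * k ^ 4 := by
  obtain ⟨hν_ge, -⟩ := short_step_mem_Icc hμ hk hkm hν
  have hν_pos : 0 < ν := by linarith
  have hm : 0 < m := Real.sqrt_pos.mp (by linarith)
  have hstep : m * (μ - ν) ^ 2 = k ^ 2 * μ ^ 2 := by
    rw [hν, sub_sub_cancel, div_pow, Real.sq_sqrt hm.le, mul_div_cancel₀ _ hm.ne', mul_pow]
  have hone : 1 ≤ k ^ 2 := one_le_pow₀ hk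
  have hfactor : 16 * m * (μ - ν) ^ 2 / (μ * ν) ≤ 18 * k ^ 2 := by
    rw [mul_assoc, hstep, div_le_iff₀ (by positivity)]
    have hμν : 16 * μ ≤ 18 * ν := by linarith
    calc 16 * (k ^ 2 * μ ^ 2) = k ^ 2 * μ * (16 * μ) := by ring
      _ ≤ k ^ 2 * μ * (18 * ν) := by gcongr
      _ = 18 * k ^ 2 * (μ * ν) := by ring
  calc (2 + 16 * m * (μ - ν) ^ 2 / (μ * ν)) ^ 2
    _ ≤ (20 * k ^ 2) ^ 2 := by
        gcongr
        linarith
    _ = 400 * k ^ 4 := by ring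
    _ ≤ 10 ^ 6 * k ^ 4 := by
        gcongr
        norm_num

end ShortStep

theorem central_path_resistance_stability_general {V E : Type*} [Fintype V] [Fintype E]
    [DecidableEq V] (head tail : E → V) (s t : V) (hst : s ≠ t) (u : E → ℝ) (B : Matrix E V ℝ)
    (hB : ∀ e v, B e v = (if v = head e then (1 : ℝ) else 0) - (if v = tail e then 1 else 0))
    (χst : V → ℝ)
    (hχ : χst = fun v => (if v = t then (1 : ℝ) else 0) - (if v = s then 1 else 0))
    (F : ℝ) (hF : IsFeasibleValue B u χst F)
    (U : ℝ) (P : Finset E) (hpre : Preconditioned head tail s t u U P)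
    (μ ν : ℝ) (hμ : 0 < μ) (hμF : μ ≤ F) (hν : 0 < ν) (hνF : ν ≤ F)
    (f : E → ℝ) (hf : IsCentralFlow B u χst F μ f)
    (f' : E → ℝ) (hf' : IsCentralFlow B u χst F ν f')
    (C : ℝ) (hC : (2 + 16 * Fintype.card E * (μ - ν) ^ 2 / (μ * ν)) ^ 2 ≤ C) (e : E) :
    1 / C * resist u f' e ≤ resist u f e ∧ resist u f e ≤ C * resist u f' e := by
  obtain ⟨hfeas, hroutes, φ, hφ⟩ := hf
  obtain ⟨hfeas', hroutes', φ', hφ'⟩ := hf'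
  have hpair : IsCentralPair B u χst F μ f φ := ⟨hfeas, hroutes, hφ⟩
  have hpair' : IsCentralPair B u χst F ν f' φ' := ⟨hfeas', hroutes', hφ'⟩
  have hrow : ∀ e ∈ P, B e = χst ∨ B e = -χst := fun _ he ↦ hpre.row_eq hB hχ he
  have hu : ∀ e ∈ P, (u e)⁻¹ ≤ Fintype.card E / F := fun _ he ↦
    hpre.inv_capacity_le hst hB hχ (hμ.trans_le hμF) hF he
  have henergy := hpair.secantEnergy_le hpair' hF hμ hμF hν hνF hrow hu hpre.2.2.2 e
  have henergy' := henergy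
  rw [secantEnergy_comm] at henergy'
  have hC_pos : 0 < C := lt_of_lt_of_le (by positivity) hC
  rw [one_div, inv_mul_le_iff₀ hC_pos]
  exact ⟨(resist_le_of_secantEnergy_le (hfeas e) (hfeas' e) henergy).trans
      (mul_le_mul_of_nonneg_right hC (resist_nonneg u f e)),
    (resist_le_of_secantEnergy_le (hfeas' e) (hfeas e) henergy').trans
      (mul_le_mul_of_nonneg_right hC (resist_nonneg u f' e))⟩

/-- Lemma `stable`, central path stability: for `μ̂ = μ − kμ/√m` with
`1 ≤ k ≤ √m/10`, the central path resistances satisfy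
`(10⁶k⁴)⁻¹ r(f(μ̂))_e ≤ r(f(μ))_e ≤ 10⁶k⁴ r(f(μ̂))_e` for every edge. -/
theorem central_path_resistance_stability {V E : Type*} [Fintype V] [Fintype E] [DecidableEq V]
    [DecidableEq E]
    (head tail : E → V) (s t : V) (hst : s ≠ t)
    (u : E → ℝ) (hu : ∀ e, 0 < u e)
    (B : Matrix E V ℝ)
    (hB : ∀ e v, B e v = (if v = head e then (1 : ℝ) else 0) - (if v = tail e then 1 else 0))
    (χst : V → ℝ)
    (hχ : χst = fun v => (if v = t then (1 : ℝ) else 0) - (if v = s then 1 else 0))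
    (hconn : ∀ x : V → ℝ, (∀ e, x (head e) = x (tail e)) → ∀ v w : V, x v = x w)
    (Fstar : ℝ)
    (hFstar : IsGreatest
      {F : ℝ | ∃ f : E → ℝ, (∀ e, |f e| ≤ u e) ∧ Bᵀ *ᵥ f = F • χst} Fstar)
    (U : ℝ) (P : Finset E) (hpre : Preconditioned head tail s t u U P)
    (μ : ℝ) (hμ0 : 0 < μ) (hμF : μ ≤ Fstar)
    (k : ℝ) (hk1 : 1 ≤ k) (hk2 : k ≤ Real.sqrt (Fintype.card E) / 10)
    (μhat : ℝ) (hμhat : μhat = μ - k * μ / Real.sqrt (Fintype.card E))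
    (fμ : E → ℝ) (hfμ : IsCentralFlow B u χst Fstar μ fμ)
    (fh : E → ℝ) (hfh : IsCentralFlow B u χst Fstar μhat fh) :
    ∀ e : E,
      (1 / (10 ^ 6 * k ^ 4)) * resist u fh e ≤ resist u fμ e ∧
        resist u fμ e ≤ 10 ^ 6 * k ^ 4 * resist u fh e := by
  have hμhat_mem := short_step_mem_Icc hμ0 hk1 hk2 hμhat
  exact central_path_resistance_stability_general head tail s t hst u B hB χst hχ Fstar hFstar.1
    U P hpre μ μhat hμ0 hμF (by linarith [hμhat_mem.1]) (hμhat_mem.2.trans hμF) fμ hfμ fh hfh _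
    (short_step_factor_le hμ0 hk1 hk2 hμhat)
end

section
/- There is an absolute constant c₀ > 0 such that the following holds. Suppose G is preconditioned, μ ∈ (0, F*], 0 < T ≤ √m/10, μ̂ = (1 − T/√m)μ, and γ ∈ (0, 1). For each edge e, let change(e, γ) be the largest integer τ ≥ 0 for which there exist real numbers μ ≥ μ^{(1)} > μ^{(2)} > ⋯ > μ^{(τ+1)} ≥ μ̂ with r(f(μ^{(i)}))_e^{1/2} · |f(μ^{(i)})_e − f(μ^{(i+1)})_e| ≥ γ for all 1 ≤ i ≤ τ. Then Σ_{e∈E} change(e, γ) ≤ c₀ T² γ⁻². -/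
open Matrix

/-!
Along the central path, give each edge the coordinate `log u⁻ - log u⁺`. The sum of its squared
increments is at most twice the symmetrized Bregman divergence of the barrier, and each counted
change of an edge moves its coordinate by at least `log (1 + γ / √2)`.

By duality the divergence between the flows at `ν` and `ν'` is `(ν' - ν)` times the difference of
their `s`-`t` potential drops. The preconditioning edges all see this same difference, and their
slack is at least of order `ν / m`; since they make up half of the edges, the divergence is
`O(m (ν - ν')² / ν²)`. So the vector of coordinates is a Lipschitz curve in `ℓ²`. By Minkowski's
inequality the vector of coordinatewise variations has `ℓ²` norm at most the length of the curve,
and `τ ≤ τ²` turns this into a bound on the total count.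
-/

section LogInequalities

theorem sq_log_sub_log_le {a b : ℝ} (ha : 0 < a) (hb : 0 < b) :
    (Real.log a - Real.log b) ^ 2 ≤ (a - b) ^ 2 * (a * b)⁻¹ := by
  rw [← Real.log_div ha.ne' hb.ne']
  set x := Real.log (a / b) with hx
  have half_sq : (x / 2) ^ 2 ≤ Real.sinh (x / 2) ^ 2 := by
    rw [sq_le_sq, Real.abs_sinh]
    exact Real.self_le_sinh_iff.2 (abs_nonneg _)
  have cosh_eq : Real.cosh x = 1 + 2 * Real.sinh (x / 2) ^ 2 := by
    rw [show x = 2 * (x / 2) by ring, Real.cosh_two_mul, Real.cosh_sq]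
    ring_nf
  calc x ^ 2 ≤ 2 * (Real.cosh x - 1) := by linarith
    _ = (a - b) ^ 2 * (a * b)⁻¹ := by
      rw [hx, Real.cosh_log (by positivity)]
      field_simp
      ring

theorem log_one_add_abs_sub_div_le {a b : ℝ} (ha : 0 < a) (hb : 0 < b) :
    Real.log (1 + |a - b| / a) ≤ |Real.log a - Real.log b| := by
  rcases le_total a b with hab | hba
  · rw [abs_sub_comm, abs_sub_comm (Real.log a), abs_of_nonneg (sub_nonneg.2 hab), sub_div,
      div_self ha.ne', add_sub_cancel, Real.log_div hb.ne' ha.ne']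
    exact le_abs_self _
  · rw [← Real.log_div ha.ne' hb.ne', abs_of_nonneg (sub_nonneg.2 hba)]
    refine (Real.log_le_log (add_pos_of_pos_of_nonneg one_pos (by bound)) ?_).trans
      (le_abs_self _)
    calc 1 + (a - b) / a ≤ 1 + (a - b) / b := by gcongr
      _ = a / b := by rw [sub_div, div_self hb.ne', add_sub_cancel]

theorem sq_le_eight_mul_sq_log {γ : ℝ} (hγ : 0 ≤ γ) (hγ1 : γ ≤ 1) :
    γ ^ 2 ≤ 8 * Real.log (1 + γ / √2) ^ 2 := by
  have hsq : (2 * √2) ^ 2 = 8 := by rw [mul_pow, Real.sq_sqrt zero_le_two]; norm_num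
  have h1 : 1 ≤ √2 := Real.one_le_sqrt.2 one_le_two
  rw [← hsq, ← mul_pow]
  gcongr
  calc γ ≤ 2 * √2 * (2 * (γ / √2) / (γ / √2 + 2)) := by
        rw [← mul_div_assoc, le_div_iff₀ (by positivity)]
        have : γ / √2 ≤ 1 := by rw [div_le_one (by positivity)]; linarith
        have : 2 * √2 * (2 * (γ / √2)) = 4 * γ := by
          linear_combination 4 * mul_div_cancel₀ γ (by positivity : √2 ≠ 0)
        nlinarith
    _ ≤ 2 * √2 * Real.log (1 + γ / √2) := by
        gcongr
        exact Real.le_log_one_add_of_nonneg (by positivity)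

end LogInequalities

/-- Derivative at `x` of the logarithmic barrier `-log (c - x) - log (c + x)` of an edge of
capacity `c`. -/
noncomputable def barrierGrad (c x : ℝ) : ℝ := (c - x)⁻¹ - (c + x)⁻¹

/-- Divided difference of `barrierGrad c` between `x` and `y`; on the diagonal it is the second
derivative of the barrier, that is, the resistance of the edge. -/
noncomputable def barrierSlope (c x y : ℝ) : ℝ :=
  ((c - x) * (c - y))⁻¹ + ((c + x) * (c + y))⁻¹

/-- Logarithm of the ratio of the two slacks of an edge of capacity `c` carrying flow `x`. Its
derivative `(c - x)⁻¹ + (c + x)⁻¹` is comparable to the square root of the resistance. -/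
noncomputable def logSlackRatio (c x : ℝ) : ℝ := Real.log (c + x) - Real.log (c - x)

theorem resist_eq_barrierSlope {E : Type*} (u f : E → ℝ) (e : E) :
    resist u f e = barrierSlope (u e) (f e) (f e) := by
  simp only [resist, barrierSlope, sq]

section Edge

variable {c x y : ℝ}

theorem barrierGrad_neg : barrierGrad c (-x) = -barrierGrad c x := by
  simp only [barrierGrad, sub_neg_eq_add, ← sub_eq_add_neg, neg_sub]

theorem barrierSlope_neg : barrierSlope c (-x) (-y) = barrierSlope c x y := by
  simp only [barrierSlope, sub_neg_eq_add, ← sub_eq_add_neg, add_comm]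

theorem logSlackRatio_neg : logSlackRatio c (-x) = -logSlackRatio c x := by
  simp only [logSlackRatio, sub_neg_eq_add, ← sub_eq_add_neg, neg_sub]

theorem sub_pos_and_add_pos_of_abs_lt (hx : |x| < c) : 0 < c - x ∧ 0 < c + x := by
  constructor <;> linarith [abs_lt.1 hx]

theorem barrierGrad_sub_barrierGrad (hx : |x| < c) (hy : |y| < c) :
    barrierGrad c x - barrierGrad c y = (x - y) * barrierSlope c x y := by
  obtain ⟨hx₁, hx₂⟩ := sub_pos_and_add_pos_of_abs_lt hx
  obtain ⟨hy₁, hy₂⟩ := sub_pos_and_add_pos_of_abs_lt hy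
  unfold barrierGrad barrierSlope
  field_simp
  ring

theorem barrierSlope_pos (hx : |x| < c) (hy : |y| < c) : 0 < barrierSlope c x y := by
  obtain ⟨hx₁, hx₂⟩ := sub_pos_and_add_pos_of_abs_lt hx
  obtain ⟨hy₁, hy₂⟩ := sub_pos_and_add_pos_of_abs_lt hy
  unfold barrierSlope
  positivity

theorem barrierGrad_sub_mul_sub_nonneg (hx : |x| < c) (hy : |y| < c) :
    0 ≤ (barrierGrad c x - barrierGrad c y) * (x - y) := by
  rw [barrierGrad_sub_barrierGrad hx hy, mul_right_comm]
  exact mul_nonneg (mul_self_nonneg _) (barrierSlope_pos hx hy).le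

theorem barrierGrad_mul_sub_le_two (hx : |x| < c) (hy : |y| ≤ c) :
    barrierGrad c x * (y - x) ≤ 2 := by
  obtain ⟨hx₁, hx₂⟩ := sub_pos_and_add_pos_of_abs_lt hx
  obtain ⟨hy₁, hy₂⟩ := abs_le.1 hy
  have h₁ : (c - x)⁻¹ * (y - x) ≤ 1 := by rw [inv_mul_le_iff₀ hx₁]; linarith
  have h₂ : (c + x)⁻¹ * (x - y) ≤ 1 := by rw [inv_mul_le_iff₀ hx₂]; linarith
  calc barrierGrad c x * (y - x) = (c - x)⁻¹ * (y - x) + (c + x)⁻¹ * (x - y) := by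
        rw [barrierGrad]; ring
    _ ≤ 2 := by linarith

theorem inv_sub_le_abs_barrierGrad_add (hx : |x| < c) :
    (c - x)⁻¹ ≤ |barrierGrad c x| + c⁻¹ := by
  have hc : 0 < c := (abs_nonneg x).trans_lt hx
  rcases le_total 0 x with h | h
  · have inv_add_le : (c + x)⁻¹ ≤ c⁻¹ := inv_anti₀ hc (by linarith)
    calc (c - x)⁻¹ = barrierGrad c x + (c + x)⁻¹ := (sub_add_cancel _ _).symm
      _ ≤ |barrierGrad c x| + c⁻¹ := add_le_add (le_abs_self _) inv_add_le
  · exact (inv_anti₀ hc (by linarith)).trans (le_add_of_nonneg_left (abs_nonneg _))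

theorem inv_add_le_abs_barrierGrad_add (hx : |x| < c) :
    (c + x)⁻¹ ≤ |barrierGrad c x| + c⁻¹ := by
  simpa only [sub_neg_eq_add, barrierGrad_neg, abs_neg] using
    inv_sub_le_abs_barrierGrad_add (c := c) (x := -x) (by rwa [abs_neg])

theorem barrierSlope_le_two_mul_sq {R : ℝ} (hx : |x| < c) (hy : |y| < c)
    (hxR : |barrierGrad c x| + c⁻¹ ≤ R) (hyR : |barrierGrad c y| + c⁻¹ ≤ R) :
    barrierSlope c x y ≤ 2 * R ^ 2 := by
  obtain ⟨hx₁, hx₂⟩ := sub_pos_and_add_pos_of_abs_lt hx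
  obtain ⟨hy₁, hy₂⟩ := sub_pos_and_add_pos_of_abs_lt hy
  have hsub : (c - x)⁻¹ * (c - y)⁻¹ ≤ R * R :=
    mul_le_mul ((inv_sub_le_abs_barrierGrad_add hx).trans hxR)
      ((inv_sub_le_abs_barrierGrad_add hy).trans hyR) (by positivity)
      ((inv_pos.2 hx₁).le.trans ((inv_sub_le_abs_barrierGrad_add hx).trans hxR))
  have hadd : (c + x)⁻¹ * (c + y)⁻¹ ≤ R * R :=
    mul_le_mul ((inv_add_le_abs_barrierGrad_add hx).trans hxR)
      ((inv_add_le_abs_barrierGrad_add hy).trans hyR) (by positivity)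
      ((inv_pos.2 hx₂).le.trans ((inv_add_le_abs_barrierGrad_add hx).trans hxR))
  rw [barrierSlope, mul_inv, mul_inv]
  linarith

theorem sq_barrierGrad_sub_le {R : ℝ} (hx : |x| < c) (hy : |y| < c)
    (hxR : |barrierGrad c x| + c⁻¹ ≤ R) (hyR : |barrierGrad c y| + c⁻¹ ≤ R) :
    (barrierGrad c x - barrierGrad c y) ^ 2 ≤
      2 * R ^ 2 * ((barrierGrad c x - barrierGrad c y) * (x - y)) :=
  calc (barrierGrad c x - barrierGrad c y) ^ 2
      = barrierSlope c x y * ((barrierGrad c x - barrierGrad c y) * (x - y)) := by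
        rw [barrierGrad_sub_barrierGrad hx hy]; ring
    _ ≤ _ := mul_le_mul_of_nonneg_right (barrierSlope_le_two_mul_sq hx hy hxR hyR)
        (barrierGrad_sub_mul_sub_nonneg hx hy)

theorem sq_logSlackRatio_sub_le (hx : |x| < c) (hy : |y| < c) :
    (logSlackRatio c x - logSlackRatio c y) ^ 2 ≤
      2 * ((barrierGrad c x - barrierGrad c y) * (x - y)) := by
  obtain ⟨hx₁, hx₂⟩ := sub_pos_and_add_pos_of_abs_lt hx
  obtain ⟨hy₁, hy₂⟩ := sub_pos_and_add_pos_of_abs_lt hy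
  have hadd := sq_log_sub_log_le hx₂ hy₂
  have hsub := sq_log_sub_log_le hx₁ hy₁
  rw [add_sub_add_left_eq_sub] at hadd
  rw [sub_sub_sub_cancel_left, sub_sq_comm] at hsub
  calc (logSlackRatio c x - logSlackRatio c y) ^ 2
      = ((Real.log (c + x) - Real.log (c + y)) - (Real.log (c - x) - Real.log (c - y))) ^ 2 := by
        simp only [logSlackRatio]; ring
    _ ≤ 2 * ((Real.log (c + x) - Real.log (c + y)) ^ 2
          + (Real.log (c - x) - Real.log (c - y)) ^ 2) := by
        rw [sub_eq_add_neg, ← neg_sq (Real.log (c - x) - Real.log (c - y))]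
        exact add_sq_le
    _ ≤ 2 * ((x - y) ^ 2 * barrierSlope c x y) := by rw [barrierSlope]; linarith
    _ = _ := by rw [barrierGrad_sub_barrierGrad hx hy]; ring

theorem abs_log_sub_le_abs_logSlackRatio_sub (hx : |x| < c) (hy : |y| < c) :
    |Real.log (c - x) - Real.log (c - y)| ≤ |logSlackRatio c x - logSlackRatio c y| := by
  wlog hxy : y ≤ x generalizing x y
  · simpa only [abs_sub_comm] using this hy hx (le_of_not_ge hxy)
  have hsub := Real.log_le_log (sub_pos_and_add_pos_of_abs_lt hx).1 (sub_le_sub_left hxy c)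
  have hadd := Real.log_le_log (sub_pos_and_add_pos_of_abs_lt hy).2 (add_le_add_right hxy c)
  rw [abs_of_nonpos (sub_nonpos.2 hsub), logSlackRatio, logSlackRatio]
  exact le_trans (by linarith) (le_abs_self _)

theorem log_one_add_le_abs_logSlackRatio_sub (hx : |x| < c) (hy : |y| < c) :
    Real.log (1 + √(barrierSlope c x x) * |x - y| / √2) ≤
      |logSlackRatio c x - logSlackRatio c y| := by
  wlog h0 : 0 ≤ x generalizing x y
  · have h := this (x := -x) (y := -y) (by rwa [abs_neg]) (by rwa [abs_neg]) (by linarith)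
    simpa only [barrierSlope_neg, logSlackRatio_neg, neg_sub_neg, abs_sub_comm] using h
  obtain ⟨hx₁, hx₂⟩ := sub_pos_and_add_pos_of_abs_lt hx
  have slope_le : barrierSlope c x x ≤ 2 * ((c - x)⁻¹) ^ 2 := by
    have : (c + x)⁻¹ ≤ (c - x)⁻¹ := inv_anti₀ hx₁ (by linarith)
    have : (c + x)⁻¹ * (c + x)⁻¹ ≤ (c - x)⁻¹ * (c - x)⁻¹ := by gcongr
    rw [barrierSlope, mul_inv, mul_inv]
    linarith
  have step_le : √(barrierSlope c x x) * |x - y| / √2 ≤ |(c - x) - (c - y)| / (c - x) := by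
    rw [sub_sub_sub_cancel_left, abs_sub_comm y x, div_le_iff₀ (by positivity)]
    calc √(barrierSlope c x x) * |x - y| ≤ √2 * (c - x)⁻¹ * |x - y| := by
          gcongr
          refine (Real.sqrt_le_sqrt slope_le).trans_eq ?_
          rw [Real.sqrt_mul zero_le_two, Real.sqrt_sq (by positivity)]
      _ = |x - y| / (c - x) * √2 := by ring
  calc Real.log (1 + √(barrierSlope c x x) * |x - y| / √2)
      ≤ Real.log (1 + |(c - x) - (c - y)| / (c - x)) := by gcongr
    _ ≤ |Real.log (c - x) - Real.log (c - y)| :=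
      log_one_add_abs_sub_div_le hx₁ (sub_pos_and_add_pos_of_abs_lt hy).1
    _ ≤ _ := abs_log_sub_le_abs_logSlackRatio_sub hx hy

end Edge

section Counting

variable {α ι : Type*} [LinearOrder α] [Fintype ι]

/-- Only finitely many parameters matter for the count, so `A` is built from left to right, adding
the absolute values of the coordinates of each increment of `H`. -/
theorem exists_coordinatewise_dominating (H : α → EuclideanSpace ℝ ι) (ℓ : α → ℝ) (S : Finset α)
    (hH : ∀ x ∈ S, ∀ y ∈ S, x ≤ y → ‖H y - H x‖ ≤ ℓ y - ℓ x) :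
    ∃ A : α → EuclideanSpace ℝ ι, ∀ x ∈ S, ∀ y ∈ S, x ≤ y →
      (∀ i, |H y i - H x i| ≤ A y i - A x i) ∧ ‖A y - A x‖ ≤ ℓ y - ℓ x := by
  induction S using Finset.induction_on_max with
  | empty => exact ⟨0, by simp⟩
  | insert z S hz ih =>
    obtain ⟨A, hA⟩ := ih fun x hx y hy => hH x (Finset.mem_insert_of_mem hx) y
      (Finset.mem_insert_of_mem hy)
    rcases S.eq_empty_or_nonempty with rfl | hne
    · exact ⟨0, by simp⟩
    set w := S.max' hne
    have hwS : w ∈ S := S.max'_mem hne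
    set d : EuclideanSpace ℝ ι := WithLp.toLp 2 fun i => |H z i - H w i| with hd
    have norm_d : ‖d‖ ≤ ℓ z - ℓ w := by
      have : ‖d‖ = ‖H z - H w‖ := by simp [EuclideanSpace.norm_eq, hd]
      rw [this]
      exact hH w (Finset.mem_insert_of_mem hwS) z (Finset.mem_insert_self _ _) (hz w hwS).le
    refine ⟨Function.update A z (A w + d), fun x hx y hy hxy => ?_⟩
    have update_of_mem : ∀ v ∈ S, Function.update A z (A w + d) v = A v := fun v hv =>
      Function.update_of_ne (hz v hv).ne _ _
    rcases Finset.mem_insert.1 hx with rfl | hxS <;> rcases Finset.mem_insert.1 hy with rfl | hyS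
    · simp
    · exact absurd (hz y hyS) (not_lt.2 hxy)
    · obtain ⟨hcoord, hnorm⟩ := hA x hxS w hwS (S.le_max' x hxS)
      rw [update_of_mem x hxS, Function.update_self]
      refine ⟨fun i => ?_, ?_⟩
      · have := abs_sub_le (H y i) (H w i) (H x i)
        simp only [PiLp.add_apply, hd]
        linarith [hcoord i]
      · rw [add_sub_right_comm]
        exact (norm_add_le _ _).trans (by linarith)
    · rw [update_of_mem x hxS, update_of_mem y hyS]
      exact hA x hxS y hyS hxy

theorem natCast_mul_le_sub_of_forall_le_sub {n : ℕ} {δ : ℝ} (g : Fin (n + 1) → ℝ)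
    (hg : ∀ i : Fin n, δ ≤ g i.castSucc - g i.succ) : n * δ ≤ g 0 - g (Fin.last n) := by
  have telescope := (Fin.sum_univ_succ g).symm.trans (Fin.sum_univ_castSucc g)
  calc n * δ = ∑ _i : Fin n, δ := by simp
    _ ≤ ∑ i : Fin n, (g i.castSucc - g i.succ) := Finset.sum_le_sum fun i _ => hg i
    _ = g 0 - g (Fin.last n) := by rw [Finset.sum_sub_distrib]; linarith

theorem sum_natCast_mul_sq_le_sq_sub {a b : α} (hab : a ≤ b) (H : α → EuclideanSpace ℝ ι)
    (ℓ : α → ℝ) (hH : ∀ x y, a ≤ x → x ≤ y → y ≤ b → ‖H y - H x‖ ≤ ℓ y - ℓ x)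
    {δ : ℝ} (hδ : 0 ≤ δ) (τ : ι → ℕ) (p : (i : ι) → Fin (τ i + 1) → α)
    (hp : ∀ i, Antitone (p i)) (hpb : ∀ i, p i 0 ≤ b) (hpa : ∀ i, a ≤ p i (Fin.last (τ i)))
    (hstep : ∀ i (j : Fin (τ i)), δ ≤ |H (p i j.castSucc) i - H (p i j.succ) i|) :
    ∑ i, (τ i : ℝ) * δ ^ 2 ≤ (ℓ b - ℓ a) ^ 2 := by
  classical
  have mem_Icc : ∀ i j, p i j ∈ Set.Icc a b := fun i j =>
    ⟨(hpa i).trans (hp i (Fin.le_last j)), (hp i (Fin.zero_le j)).trans (hpb i)⟩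
  set S : Finset α := {a, b} ∪ Finset.univ.biUnion fun i => Finset.univ.image (p i) with hS
  have S_subset : ∀ x ∈ S, x ∈ Set.Icc a b := by
    intro x hx
    simp only [hS, Finset.mem_union, Finset.mem_insert, Finset.mem_singleton, Finset.mem_biUnion,
      Finset.mem_image, Finset.mem_univ, true_and] at hx
    rcases hx with (rfl | rfl) | ⟨i, j, rfl⟩
    exacts [Set.left_mem_Icc.2 hab, Set.right_mem_Icc.2 hab, mem_Icc i j]
  have haS : a ∈ S := by simp [hS]
  have hbS : b ∈ S := by simp [hS]
  have hpS : ∀ i j, p i j ∈ S := fun i j => by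
    simp only [hS, Finset.mem_union, Finset.mem_biUnion, Finset.mem_image, Finset.mem_univ,
      true_and]
    exact Or.inr ⟨i, j, rfl⟩
  obtain ⟨A, hA⟩ := exists_coordinatewise_dominating H ℓ S fun x hx y hy hxy =>
    hH x y (S_subset x hx).1 hxy (S_subset y hy).2
  have A_mono : ∀ x ∈ S, ∀ y ∈ S, x ≤ y → ∀ i, A x i ≤ A y i := fun x hx y hy hxy i =>
    sub_nonneg.1 ((abs_nonneg _).trans ((hA x hx y hy hxy).1 i))
  have count_le : ∀ i, τ i * δ ≤ A b i - A a i := fun i =>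
    calc τ i * δ ≤ A (p i 0) i - A (p i (Fin.last _)) i :=
          natCast_mul_le_sub_of_forall_le_sub (fun j => A (p i j) i) fun j =>
            (hstep i j).trans ((hA _ (hpS _ _) _ (hpS _ _) (hp i j.castSucc_le_succ)).1 i)
      _ ≤ A b i - A a i := sub_le_sub (A_mono _ (hpS _ _) _ hbS (hpb i) i)
          (A_mono _ haS _ (hpS _ _) (hpa i) i)
  calc ∑ i, (τ i : ℝ) * δ ^ 2 ≤ ∑ i, (A b i - A a i) ^ 2 := by
        refine Finset.sum_le_sum fun i _ => le_trans ?_ (pow_le_pow_left₀ (by positivity)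
          (count_le i) 2)
        rw [mul_pow]
        gcongr
        exact_mod_cast Nat.le_self_pow two_ne_zero (τ i)
    _ = ‖A b - A a‖ ^ 2 := by simp [EuclideanSpace.norm_sq_eq]
    _ ≤ (ℓ b - ℓ a) ^ 2 := by
        gcongr
        exact (hA a haS b hbS hab).2

end Counting

/-- Symmetrized Bregman divergence `⟨∇V(f) - ∇V(g), f - g⟩` of the logarithmic barrier `V`. -/
noncomputable def barrierDivergence {E : Type*} [Fintype E] (u f g : E → ℝ) : ℝ :=
  ∑ e, (barrierGrad (u e) (f e) - barrierGrad (u e) (g e)) * (f e - g e)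

/-- The vector of logarithmic slack ratios of a flow, with the `ℓ²` norm. -/
noncomputable def logSlackVector {E : Type*} (u f : E → ℝ) : EuclideanSpace ℝ E :=
  WithLp.toLp 2 fun e => logSlackRatio (u e) (f e)

theorem sq_norm_logSlackVector_sub_le {E : Type*} [Fintype E] {u f g : E → ℝ}
    (hf : ∀ e, |f e| < u e) (hg : ∀ e, |g e| < u e) :
    ‖logSlackVector u f - logSlackVector u g‖ ^ 2 ≤ 2 * barrierDivergence u f g := by
  rw [EuclideanSpace.norm_sq_eq, barrierDivergence, Finset.mul_sum]
  refine Finset.sum_le_sum fun e _ => ?_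
  rw [Real.norm_eq_abs, sq_abs]
  exact sq_logSlackRatio_sub_le (hf e) (hg e)

theorem barrierDivergence_nonneg {E : Type*} [Fintype E] {u f g : E → ℝ}
    (hf : ∀ e, |f e| < u e) (hg : ∀ e, |g e| < u e) : 0 ≤ barrierDivergence u f g :=
  Finset.sum_nonneg fun e _ => barrierGrad_sub_mul_sub_nonneg (hf e) (hg e)

section CentralPath

variable {V E : Type*} {B : Matrix E V ℝ} {u f g : E → ℝ} {χ : V → ℝ} {F ν ν' : ℝ}

theorem le_sum_of_transpose_mulVec_eq_smul [Fintype E] {v : V} (hB : ∀ e, |B e v| ≤ 1)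
    (hχ : χ v = 1) (hf : ∀ e, |f e| ≤ u e) (hfB : Bᵀ *ᵥ f = F • χ) : F ≤ ∑ e, u e :=
  calc F = (Bᵀ *ᵥ f) v := by simp [hfB, hχ]
    _ = ∑ e, B e v * f e := rfl
    _ ≤ ∑ e, u e := Finset.sum_le_sum fun e _ =>
        calc B e v * f e ≤ |B e v| * |f e| := (le_abs_self _).trans_eq (abs_mul _ _)
          _ ≤ 1 * |f e| := by gcongr; exact hB e
          _ ≤ u e := (one_mul _).trans_le (hf e)

theorem sq_drop_sub_le [Fintype V] {e : E} {φ ψ : V → ℝ} {R : ℝ}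
    (hrow : B e = χ ∨ B e = -χ) (hfe : |f e| < u e) (hge : |g e| < u e)
    (hφ : (B *ᵥ φ) e = barrierGrad (u e) (f e)) (hψ : (B *ᵥ ψ) e = barrierGrad (u e) (g e))
    (hφR : |φ ⬝ᵥ χ| + (u e)⁻¹ ≤ R) (hψR : |ψ ⬝ᵥ χ| + (u e)⁻¹ ≤ R) :
    ((φ - ψ) ⬝ᵥ χ) ^ 2 ≤
      2 * R ^ 2 * ((barrierGrad (u e) (f e) - barrierGrad (u e) (g e)) * (f e - g e)) := by
  have abs_row : ∀ θ : V → ℝ, |(B *ᵥ θ) e| = |θ ⬝ᵥ χ| := fun θ => by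
    change |B e ⬝ᵥ θ| = _
    rcases hrow with h | h <;> simp [h, dotProduct_comm θ]
  rw [← sq_abs, ← abs_row, sq_abs, mulVec_sub, Pi.sub_apply, hφ, hψ]
  rw [← abs_row, hφ] at hφR
  rw [← abs_row, hψ] at hψR
  exact sq_barrierGrad_sub_le hfe hge hφR hψR

variable [Fintype V] [Fintype E]

theorem mulVec_dotProduct_of_transpose_mulVec_eq_smul {x : E → ℝ} {c : ℝ}
    (hx : Bᵀ *ᵥ x = c • χ) (φ : V → ℝ) : (B *ᵥ φ) ⬝ᵥ x = c * (φ ⬝ᵥ χ) := by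
  rw [dotProduct_comm, dotProduct_mulVec, ← mulVec_transpose, hx, smul_dotProduct,
    dotProduct_comm, smul_eq_mul]

/-- The barrier gradient pairs to at most `2m` with the difference to any feasible flow; comparing
with the flows of values `F` and `-F` bounds the potential drop in both directions. -/
theorem IsCentralFlow.exists_potential (hf : IsCentralFlow B u χ F ν f)
    (hF : ∃ x : E → ℝ, (∀ e, |x e| ≤ u e) ∧ Bᵀ *ᵥ x = F • χ) (hν : 0 < ν) (hνF : ν ≤ F) :
    ∃ φ : V → ℝ, (∀ e, (B *ᵥ φ) e = barrierGrad (u e) (f e)) ∧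
      |φ ⬝ᵥ χ| ≤ 2 * Fintype.card E / ν := by
  obtain ⟨hfu, hfB, φ, hφ⟩ := hf
  obtain ⟨x, hxu, hxB⟩ := hF
  refine ⟨φ, hφ, ?_⟩
  have drop_le : ∀ (y : E → ℝ) (c : ℝ), (∀ e, |y e| ≤ u e) → Bᵀ *ᵥ y = c • χ →
      (c - (F - ν)) * (φ ⬝ᵥ χ) ≤ 2 * Fintype.card E := fun y c hyu hyB =>
    calc (c - (F - ν)) * (φ ⬝ᵥ χ) = (B *ᵥ φ) ⬝ᵥ (y - f) :=
          (mulVec_dotProduct_of_transpose_mulVec_eq_smul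
            (by rw [mulVec_sub, hyB, hfB, ← sub_smul]) φ).symm
      _ ≤ ∑ _e : E, (2 : ℝ) := Finset.sum_le_sum fun e _ => by
          rw [hφ]
          exact barrierGrad_mul_sub_le_two (hfu e) (hyu e)
      _ = 2 * Fintype.card E := by simp [mul_comm]
  have forward := drop_le x F hxu hxB
  have backward := drop_le (-x) (-F) (by simpa using hxu) (by rw [mulVec_neg, hxB, neg_smul])
  rw [le_div_iff₀ hν]
  rcases abs_cases (φ ⬝ᵥ χ) with ⟨h, _⟩ | ⟨h, _⟩ <;> rw [h] <;> nlinarith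

theorem IsCentralFlow.barrierDivergence_eq (hf : IsCentralFlow B u χ F ν f)
    (hg : IsCentralFlow B u χ F ν' g) {φ ψ : V → ℝ}
    (hφ : ∀ e, (B *ᵥ φ) e = barrierGrad (u e) (f e))
    (hψ : ∀ e, (B *ᵥ ψ) e = barrierGrad (u e) (g e)) :
    barrierDivergence u f g = (ν' - ν) * ((φ - ψ) ⬝ᵥ χ) := by
  have hfg : Bᵀ *ᵥ (f - g) = (ν' - ν) • χ := by
    rw [mulVec_sub, hf.2.1, hg.2.1, ← sub_smul, sub_sub_sub_cancel_left]
  rw [← mulVec_dotProduct_of_transpose_mulVec_eq_smul hfg, mulVec_sub]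
  simp only [barrierDivergence, dotProduct, Pi.sub_apply, hφ, hψ]

/-- Each edge of `P` sees the full potential drop, so it contributes to the divergence at least a
multiple of the squared difference of the drops; the divergence itself is only linear in it. -/
theorem IsCentralFlow.card_mul_barrierDivergence_le {a : ℝ} {P : Finset E}
    (hf : IsCentralFlow B u χ F ν f) (hg : IsCentralFlow B u χ F ν' g)
    (hF : ∃ x : E → ℝ, (∀ e, |x e| ≤ u e) ∧ Bᵀ *ᵥ x = F • χ)
    (hP : ∀ e ∈ P, a ≤ Fintype.card E * u e ∧ (B e = χ ∨ B e = -χ)) (ha : 0 < a)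
    (haν : a ≤ ν) (hνF : ν ≤ F) (haν' : a ≤ ν') (hνF' : ν' ≤ F) :
    P.card * barrierDivergence u f g ≤ 18 * (Fintype.card E / a) ^ 2 * (ν' - ν) ^ 2 := by
  obtain ⟨φ, hφ, φ_drop⟩ := hf.exists_potential hF (ha.trans_le haν) hνF
  obtain ⟨ψ, hψ, ψ_drop⟩ := hg.exists_potential hF (ha.trans_le haν') hνF'
  set m : ℝ := (Fintype.card E : ℝ)
  set Δ := (φ - ψ) ⬝ᵥ χ
  set D := barrierDivergence u f g
  have D_eq : D = (ν' - ν) * Δ := hf.barrierDivergence_eq hg hφ hψ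
  have sq_drop_le : ∀ e ∈ P, Δ ^ 2 ≤ 2 * (3 * (m / a)) ^ 2 *
      ((barrierGrad (u e) (f e) - barrierGrad (u e) (g e)) * (f e - g e)) := fun e he => by
    have inv_le : (u e)⁻¹ ≤ m / a := by
      rw [le_div_iff₀ ha, inv_mul_le_iff₀ ((abs_nonneg _).trans_lt (hf.1 e)), mul_comm]
      exact (hP e he).1
    have drop_add_le : ∀ {x d : ℝ}, a ≤ x → d ≤ 2 * m / x → d + (u e)⁻¹ ≤ 3 * (m / a) :=
      fun {x d} hx hd => by
        have : 2 * m / x ≤ 2 * m / a := by gcongr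
        linarith [mul_div_assoc 2 m a]
    exact sq_drop_sub_le (hP e he).2 (hf.1 e) (hg.1 e) (hφ e) (hψ e) (drop_add_le haν φ_drop)
      (drop_add_le haν' ψ_drop)
  have card_mul_sq_le : P.card * Δ ^ 2 ≤ 18 * (m / a) ^ 2 * D :=
    calc P.card * Δ ^ 2 = ∑ _e ∈ P, Δ ^ 2 := by simp
      _ ≤ 2 * (3 * (m / a)) ^ 2 * ∑ e ∈ P,
          (barrierGrad (u e) (f e) - barrierGrad (u e) (g e)) * (f e - g e) := by
        rw [Finset.mul_sum]
        exact Finset.sum_le_sum sq_drop_le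
      _ ≤ 2 * (3 * (m / a)) ^ 2 * D := by
        gcongr
        exact Finset.sum_le_sum_of_subset_of_nonneg (Finset.subset_univ _)
          fun e _ _ => barrierGrad_sub_mul_sub_nonneg (hf.1 e) (hg.1 e)
      _ = 18 * (m / a) ^ 2 * D := by ring
  have D_nonneg : 0 ≤ D := barrierDivergence_nonneg hf.1 hg.1
  rcases D_nonneg.eq_or_lt with hD | hD
  · rw [← hD, mul_zero]
    positivity
  · refine le_of_mul_le_mul_right ?_ hD
    calc P.card * D * D = (ν' - ν) ^ 2 * (P.card * Δ ^ 2) := by rw [D_eq]; ring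
      _ ≤ (ν' - ν) ^ 2 * (18 * (m / a) ^ 2 * D) := by gcongr
      _ = 18 * (m / a) ^ 2 * (ν' - ν) ^ 2 * D := by ring

theorem IsCentralFlow.norm_logSlackVector_sub_le {a : ℝ} {P : Finset E}
    (hf : IsCentralFlow B u χ F ν f) (hg : IsCentralFlow B u χ F ν' g)
    (hF : ∃ x : E → ℝ, (∀ e, |x e| ≤ u e) ∧ Bᵀ *ᵥ x = F • χ)
    (hP : ∀ e ∈ P, a ≤ Fintype.card E * u e ∧ (B e = χ ∨ B e = -χ))
    (hcard : Fintype.card E ≤ 2 * P.card) (ha : 0 < a)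
    (haν : a ≤ ν) (hνF : ν ≤ F) (haν' : a ≤ ν') (hνF' : ν' ≤ F) :
    ‖logSlackVector u f - logSlackVector u g‖ ≤ √(72 * Fintype.card E) / a * |ν' - ν| := by
  rcases isEmpty_or_nonempty E with hE | hE
  · have : logSlackVector u f - logSlackVector u g = 0 := Subsingleton.elim _ _
    rw [this, norm_zero]
    positivity
  set m : ℝ := (Fintype.card E : ℝ) with hm
  have m_pos : 0 < m := Nat.cast_pos.2 Fintype.card_pos
  have divergence_le : barrierDivergence u f g ≤ 36 * m / a ^ 2 * (ν' - ν) ^ 2 := by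
    refine le_of_mul_le_mul_left ?_ m_pos
    calc m * barrierDivergence u f g ≤ 2 * P.card * barrierDivergence u f g := by
          refine mul_le_mul_of_nonneg_right ?_ (barrierDivergence_nonneg hf.1 hg.1)
          rw [hm]
          exact_mod_cast hcard
      _ ≤ 2 * (18 * (m / a) ^ 2 * (ν' - ν) ^ 2) := by
          rw [mul_assoc]
          refine mul_le_mul_of_nonneg_left ?_ zero_le_two
          exact hf.card_mul_barrierDivergence_le hg hF hP ha haν hνF haν' hνF'
      _ = m * (36 * m / a ^ 2 * (ν' - ν) ^ 2) := by ring
  rw [← sq_le_sq₀ (norm_nonneg _) (by positivity), mul_pow, div_pow,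
    Real.sq_sqrt (by positivity), sq_abs]
  calc ‖logSlackVector u f - logSlackVector u g‖ ^ 2 ≤ 2 * barrierDivergence u f g :=
        sq_norm_logSlackVector_sub_le hf.1 hg.1
    _ ≤ 2 * (36 * m / a ^ 2 * (ν' - ν) ^ 2) := by gcongr
    _ = 72 * m / a ^ 2 * (ν' - ν) ^ 2 := by ring

end CentralPath

section Preconditioned

variable {V E : Type*} [Fintype E] {head tail : E → V} {s t : V} {u : E → ℝ}
  {U : ℝ} {P : Finset E}

theorem Preconditioned.capacity_le_s14 (hP : Preconditioned head tail s t u U P) (e : E) :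
    u e ≤ 2 * U := by
  obtain ⟨hU, hPu, hPc, -⟩ := hP
  by_cases he : e ∈ P
  · exact (hPu e he).1.le
  · linarith [hPc e he]

variable [DecidableEq V] {B : Matrix E V ℝ} {χ : V → ℝ}

theorem Preconditioned.row_eq_s14 (hP : Preconditioned head tail s t u U P)
    (hB : ∀ e v, B e v = (if v = head e then (1 : ℝ) else 0) - (if v = tail e then 1 else 0))
    (hχ : χ = fun v => (if v = t then (1 : ℝ) else 0) - (if v = s then 1 else 0))
    {e : E} (he : e ∈ P) : B e = χ ∨ B e = -χ := by
  rcases (hP.2.1 e he).2 with ⟨hh, ht⟩ | ⟨hh, ht⟩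
  · exact Or.inr (funext fun v => by simp only [hB, hχ, hh, ht, Pi.neg_apply, neg_sub])
  · exact Or.inl (funext fun v => by simp only [hB, hχ, hh, ht])

theorem Preconditioned.le_card_mul_capacity (hP : Preconditioned head tail s t u U P)
    (hst : s ≠ t)
    (hB : ∀ e v, B e v = (if v = head e then (1 : ℝ) else 0) - (if v = tail e then 1 else 0))
    (hχ : χ = fun v => (if v = t then (1 : ℝ) else 0) - (if v = s then 1 else 0)) {F : ℝ}
    (hF : ∃ x : E → ℝ, (∀ e, |x e| ≤ u e) ∧ Bᵀ *ᵥ x = F • χ) {e : E} (he : e ∈ P) :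
    F ≤ Fintype.card E * u e := by
  obtain ⟨x, hxu, hxB⟩ := hF
  have abs_entry_le : ∀ d, |B d t| ≤ 1 := fun d => by
    rw [hB]
    split_ifs <;> norm_num
  calc F ≤ ∑ d, u d :=
        le_sum_of_transpose_mulVec_eq_smul abs_entry_le (by simp [hχ, hst.symm]) hxu hxB
    _ ≤ ∑ _d : E, 2 * U := Finset.sum_le_sum fun d _ => hP.capacity_le_s14 d
    _ = Fintype.card E * u e := by simp [(hP.2.1 e he).1]

end Preconditioned

theorem central_path_change_count_general {V E : Type*} [Fintype V] [Fintype E] [DecidableEq V]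
    {head tail : E → V} {s t : V} (hst : s ≠ t) {u : E → ℝ} {B : Matrix E V ℝ}
    (hB : ∀ e v, B e v = (if v = head e then (1 : ℝ) else 0) - (if v = tail e then 1 else 0))
    {χst : V → ℝ}
    (hχ : χst = fun v => (if v = t then (1 : ℝ) else 0) - (if v = s then 1 else 0)) {F : ℝ}
    (hF : ∃ f : E → ℝ, (∀ e, |f e| ≤ u e) ∧ Bᵀ *ᵥ f = F • χst) {U : ℝ} {P : Finset E}
    (hP : Preconditioned head tail s t u U P) {a b : ℝ} (ha : 0 < a) (hab : a ≤ b) (hbF : b ≤ F)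
    {γ : ℝ} (hγ : 0 < γ) {fc : ℝ → E → ℝ}
    (hfc : ∀ ν, a ≤ ν → ν ≤ b → IsCentralFlow B u χst F ν (fc ν)) {τ : E → ℕ}
    (hτ : ∀ e, ∃ ms : Fin (τ e + 1) → ℝ, StrictAnti ms ∧ ms 0 ≤ b ∧ a ≤ ms (Fin.last (τ e)) ∧
      ∀ i : Fin (τ e), γ ≤ √(resist u (fc (ms i.castSucc)) e) *
        |fc (ms i.castSucc) e - fc (ms i.succ) e|) :
    ∑ e, (τ e : ℝ) ≤
      72 * Fintype.card E * (b - a) ^ 2 / (a ^ 2 * Real.log (1 + γ / √2) ^ 2) := by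
  choose ms ms_anti ms_le le_ms ms_step using hτ
  have ms_flow : ∀ e i, IsCentralFlow B u χst F (ms e i) (fc (ms e i)) := fun e i =>
    hfc _ ((le_ms e).trans ((ms_anti e).antitone (Fin.le_last i)))
      (((ms_anti e).antitone (Fin.zero_le i)).trans (ms_le e))
  have log_pos : 0 < Real.log (1 + γ / √2) := Real.log_pos (lt_add_of_pos_right 1 (by positivity))
  set K := √(72 * Fintype.card E) / a with hK
  have hcount := sum_natCast_mul_sq_le_sq_sub hab (fun ν => logSlackVector u (fc ν)) (K * ·)
    (fun x y hax hxy hyb => by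
      have hx := hfc x hax (hxy.trans hyb)
      have hy := hfc y (hax.trans hxy) hyb
      have := hy.norm_logSlackVector_sub_le hx hF (fun e he => ⟨(hab.trans hbF).trans
        (hP.le_card_mul_capacity hst hB hχ hF he), hP.row_eq_s14 hB hχ he⟩) hP.2.2.2 ha
        (hax.trans hxy) (hyb.trans hbF) hax ((hxy.trans hyb).trans hbF)
      rwa [abs_sub_comm, abs_of_nonneg (sub_nonneg.2 hxy), mul_sub] at this)
    log_pos.le τ ms (fun e => (ms_anti e).antitone) ms_le le_ms
    (fun e i => by
      have := log_one_add_le_abs_logSlackRatio_sub ((ms_flow e i.castSucc).1 e)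
        ((ms_flow e i.succ).1 e)
      rw [← resist_eq_barrierSlope] at this
      refine le_trans ?_ this
      gcongr
      exact ms_step e i)
  rw [le_div_iff₀ (by positivity)]
  calc (∑ e, (τ e : ℝ)) * (a ^ 2 * Real.log (1 + γ / √2) ^ 2)
      = a ^ 2 * ∑ e, (τ e : ℝ) * Real.log (1 + γ / √2) ^ 2 := by rw [← Finset.sum_mul]; ring
    _ ≤ a ^ 2 * (K * b - K * a) ^ 2 := by gcongr
    _ = 72 * Fintype.card E * (b - a) ^ 2 := by
      rw [← mul_sub, mul_pow, hK, div_pow, Real.sq_sqrt (by positivity)]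
      field_simp

theorem shrunk_interval_bound_le {m T μ γ : ℝ} (hμ : 0 < μ) (hT : 0 < T) (hTm : T ≤ √m / 10)
    (hγ : 0 < γ) (hγ1 : γ ≤ 1) :
    72 * m * (μ - (1 - T / √m) * μ) ^ 2 /
      (((1 - T / √m) * μ) ^ 2 * Real.log (1 + γ / √2) ^ 2) ≤ 720 * T ^ 2 / γ ^ 2 := by
  have sqrt_pos : 0 < √m := by linarith
  have log_pos : 0 < Real.log (1 + γ / √2) := Real.log_pos (lt_add_of_pos_right 1 (by positivity))
  set L := Real.log (1 + γ / √2)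
  set ρ := T / √m
  have ρ_le : ρ ≤ 1 / 10 := by rw [div_le_iff₀ sqrt_pos]; linarith
  have T_sq : m * ρ ^ 2 = T ^ 2 := by
    rw [div_pow, Real.sq_sqrt (Real.sqrt_pos.1 sqrt_pos).le,
      mul_div_cancel₀ _ (Real.sqrt_pos.1 sqrt_pos).ne']
  have shrink_pos : 0 < 1 - ρ := by linarith
  have shrink_sq : (9 / 10) ^ 2 ≤ (1 - ρ) ^ 2 := by gcongr; linarith
  calc 72 * m * (μ - (1 - ρ) * μ) ^ 2 / (((1 - ρ) * μ) ^ 2 * L ^ 2)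
      = 72 * T ^ 2 / ((1 - ρ) ^ 2 * L ^ 2) := by
        rw [← T_sq]
        field_simp
        ring
    _ ≤ 72 * T ^ 2 / ((9 / 10) ^ 2 * (γ ^ 2 / 8)) := by
        gcongr
        linarith [sq_le_eight_mul_sq_log hγ.le hγ1]
    _ ≤ 720 * T ^ 2 / γ ^ 2 := by
        rw [div_le_div_iff₀ (by positivity) (by positivity)]
        nlinarith [mul_pos (pow_pos hT 2) (pow_pos hγ 2)]

/-- Lemma `l2change`: there is an absolute constant `c₀ > 0` such that
on a preconditioned graph, for `μ̂ = (1 − T/√m)μ` with `0 < T ≤ √m/10` and `γ ∈ (0,1)`,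
any family of counts `τ e` witnessed by decreasing subdivisions `μ ≥ μ⁽¹⁾ > ⋯ > μ^{(τ+1)} ≥ μ̂`
along which `r(f(μ⁽ⁱ⁾))_e^{1/2}|f(μ⁽ⁱ⁾)_e − f(μ⁽ⁱ⁺¹⁾)_e| ≥ γ` satisfies
`Σ_e τ e ≤ c₀ T² γ⁻²`. -/
theorem central_path_change_count :
    ∃ c₀ : ℝ, 0 < c₀ ∧
      ∀ (V E : Type) [Fintype V] [Fintype E] [DecidableEq V] [DecidableEq E]
        (head tail : E → V) (s t : V), s ≠ t →
        ∀ u : E → ℝ, (∀ e, 0 < u e) →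
        ∀ B : Matrix E V ℝ,
          (∀ e v, B e v =
            (if v = head e then (1 : ℝ) else 0) - (if v = tail e then 1 else 0)) →
        ∀ χst : V → ℝ,
          (χst = fun v => (if v = t then (1 : ℝ) else 0) - (if v = s then 1 else 0)) →
        (∀ x : V → ℝ, (∀ e, x (head e) = x (tail e)) → ∀ v w, x v = x w) →
        ∀ Fstar : ℝ,
          IsGreatest {F : ℝ | ∃ f : E → ℝ, (∀ e, |f e| ≤ u e) ∧ Bᵀ *ᵥ f = F • χst} Fstar →
        ∀ (U : ℝ) (P : Finset E), Preconditioned head tail s t u U P →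
        ∀ μ : ℝ, 0 < μ → μ ≤ Fstar →
        ∀ T : ℝ, 0 < T → T ≤ Real.sqrt (Fintype.card E) / 10 →
        ∀ μhat : ℝ, μhat = (1 - T / Real.sqrt (Fintype.card E)) * μ →
        ∀ γ : ℝ, 0 < γ → γ < 1 →
        ∀ fc : ℝ → E → ℝ,
          (∀ ν : ℝ, μhat ≤ ν → ν ≤ μ → IsCentralFlow B u χst Fstar ν (fc ν)) →
        ∀ τ : E → ℕ,
          (∀ e : E, ∃ ms : Fin (τ e + 1) → ℝ, StrictAnti ms ∧ ms 0 ≤ μ ∧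
            μhat ≤ ms (Fin.last (τ e)) ∧
            ∀ i : Fin (τ e),
              γ ≤ Real.sqrt (resist u (fc (ms i.castSucc)) e) *
                |fc (ms i.castSucc) e - fc (ms i.succ) e|) →
          (∑ e, (τ e : ℝ)) ≤ c₀ * T ^ 2 / γ ^ 2 := by
  refine ⟨720, by norm_num, ?_⟩
  rintro V E _ _ _ _ head tail s t hst u - B hB χst hχ - F hF U P hP μ hμ hμF T hT hTm _ rfl γ hγ
    hγ1 fc hfc τ hτ
  have sqrt_pos : 0 < √(Fintype.card E : ℝ) := by linarith
  have ρ_nonneg : 0 ≤ T / √(Fintype.card E : ℝ) := by positivity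
  have ρ_le : T / √(Fintype.card E : ℝ) ≤ 1 / 10 := by rw [div_le_iff₀ sqrt_pos]; linarith
  exact (central_path_change_count_general hst hB hχ hF.1 hP (mul_pos (by linarith) hμ)
    (mul_le_of_le_one_left hμ.le (by linarith)) hμF hγ hfc hτ).trans
    (shrunk_interval_bound_le hμ hT hTm hγ hγ1.le)
end
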